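/- arXiv:2312.17224 — 2 statements merged into one kernel-verified Lean document; each statement's English description precedes it below -/
import Mathlib

section
/- For every linked pair of tableaux tuples (T^+, T^-, σ), the semi-invariant f_{T^±} lies in the ℂ-linear span of the semi-invariants f_{U^±} attached to weakly semi-standard linked pairs U^± of the same weight decomposition. -/
namespace QuiverSAGBI

/-- A finite quiver with vertices `Fin n`, arrows `Fin m`, together with a
dimension vector `r`. -/
structure QuiverData where
  n : ℕ
  m : ℕ
  asrc : Fin m → Fin n
  atgt : Fin m → Fin n
  r : Fin n → ℕ

/-- A directed path in the quiver: a nonempty list of composable arrows. -/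
structure QPath (Q : QuiverData) where
  arrows : List (Fin Q.m)
  ne : arrows ≠ []
  chain : arrows.Chain' fun a b => Q.atgt a = Q.asrc b

/-- The source vertex of a path. -/
def QPath.srcV {Q : QuiverData} (P : QPath Q) : Fin Q.n :=
  Q.asrc (P.arrows.head P.ne)

/-- The target vertex of a path. -/
def QPath.tgtV {Q : QuiverData} (P : QPath Q) : Fin Q.n :=
  Q.atgt (P.arrows.getLast P.ne)

/-- The quiver is acyclic: no directed path from a vertex to itself. -/
def IsAcyclic (Q : QuiverData) : Prop := ∀ P : QPath Q, P.srcV ≠ P.tgtV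

/-- The disjoint union of the index sets `Fin (r p)`. -/
abbrev TotalIdx (Q : QuiverData) := Σ p : Fin Q.n, Fin (Q.r p)

/-- The variable `x^a_{jk}`: the `(j,k)` entry of the generic matrix `M_a` of
size `r (tgt a) × r (src a)` attached to the arrow `a`. -/
abbrev QVar (Q : QuiverData) :=
  Σ a : Fin Q.m, Fin (Q.r (Q.atgt a)) × Fin (Q.r (Q.asrc a))

/-- The coordinate ring `ℂ[x^a_{jk}]` of `Rep(Q, r)`. -/
abbrev QPoly (Q : QuiverData) := MvPolynomial (QVar Q) ℂ

/-- The generic matrix of the arrow `a`, embedded as a block in a square matrix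
indexed by the disjoint union of all the index sets. -/
noncomputable def arrowMat (Q : QuiverData) (a : Fin Q.m) :
    Matrix (TotalIdx Q) (TotalIdx Q) (QPoly Q) :=
  Matrix.of fun v u =>
    if h : v.1 = Q.atgt a ∧ u.1 = Q.asrc a then
      MvPolynomial.X ⟨a, (Fin.cast (by rw [h.1]) v.2, Fin.cast (by rw [h.2]) u.2)⟩
    else 0

/-- The matrix `M_P` of a path: the product of the matrices of its arrows,
composed along the path (last arrow leftmost); the entry `(M_P)_{l j}` is
`pathMat Q P ⟨t(P), l⟩ ⟨s(P), j⟩`. -/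
noncomputable def pathMat (Q : QuiverData) (P : QPath Q) :
    Matrix (TotalIdx Q) (TotalIdx Q) (QPoly Q) :=
  ((P.arrows.map (arrowMat Q)).reverse).prod

/-- A label of the target tableau `T⁺_p`: a pair `(P, j)` where `P` is a path
with target `p` and `j : Fin (r (src P))`. -/
def PLabel (Q : QuiverData) (p : Fin Q.n) :=
  {x : Σ P : QPath Q, Fin (Q.r P.srcV) // x.1.tgtV = p}

/-- A label of the source tableau `T⁻_p`: a pair `(P, j)` where `P` is a path
with source `p` and `j : Fin (r (tgt P))`. -/
def MLabel (Q : QuiverData) (p : Fin Q.n) :=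
  {x : Σ P : QPath Q, Fin (Q.r P.tgtV) // x.1.srcV = p}

/-- A linked pair of tableaux tuples for the weight decomposition
`w = w⁺ - w⁻`:  for each vertex `p`, a target tableau `T⁺_p` of shape
`r p × wp p` and a source tableau `T⁻_p` of shape `r p × wm p`, together with
a bijection `link` of boxes such that the box in row `l` of `T⁺_p` labeled
`(P, j)` is sent to a box lying in row `j` of `T⁻_{s(P)}` which is labeled
`(P, l)` (rows in different `Fin` types are compared via their values). -/
structure GLinkedPair (Q : QuiverData) (wp wm : Fin Q.n → ℕ) where
  Tp : (p : Fin Q.n) → Fin (Q.r p) → Fin (wp p) → PLabel Q p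
  Tm : (p : Fin Q.n) → Fin (Q.r p) → Fin (wm p) → MLabel Q p
  link : (Σ p : Fin Q.n, Fin (Q.r p) × Fin (wp p)) ≃
    (Σ p : Fin Q.n, Fin (Q.r p) × Fin (wm p))
  link_vertex : ∀ b, (link b).1 = ((Tp b.1 b.2.1 b.2.2).1.1).srcV
  link_row : ∀ b, ((link b).2.1 : ℕ) = ((Tp b.1 b.2.1 b.2.2).1.2 : ℕ)
  link_path : ∀ b,
    (Tm (link b).1 (link b).2.1 (link b).2.2).1.1 = (Tp b.1 b.2.1 b.2.2).1.1
  link_secondEntry : ∀ b,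
    ((Tm (link b).1 (link b).2.1 (link b).2.2).1.2 : ℕ) = (b.2.1 : ℕ)

/-- `Mon(T⁺)`: the product, over all boxes of all the tableaux `T⁺_p`, of the
entry `(M_{P})_{l j}`, where the box lies in row `l` and is labeled `(P, j)`. -/
noncomputable def MonP {Q : QuiverData} {wp wm : Fin Q.n → ℕ}
    (L : GLinkedPair Q wp wm) : QPoly Q :=
  ∏ p : Fin Q.n, ∏ l : Fin (Q.r p), ∏ c : Fin (wp p),
    pathMat Q (L.Tp p l c).1.1 ⟨p, l⟩
      ⟨((L.Tp p l c).1.1).srcV, (L.Tp p l c).1.2⟩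

/-- `Mon(T⁻)`: the product, over all boxes of all the tableaux `T⁻_p`, of the
entry `(M_{P})_{l j}`, where the box lies in row `j` and is labeled `(P, l)`. -/
noncomputable def MonM {Q : QuiverData} {wp wm : Fin Q.n → ℕ}
    (L : GLinkedPair Q wp wm) : QPoly Q :=
  ∏ p : Fin Q.n, ∏ j : Fin (Q.r p), ∏ c : Fin (wm p),
    pathMat Q (L.Tm p j c).1.1
      ⟨((L.Tm p j c).1.1).tgtV, (L.Tm p j c).1.2⟩ ⟨p, j⟩

/-- The semi-invariant attached to a linked pair, generalized by an arbitrary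
relabeling map `σb` on the boxes of `T⁺` (the identity giving `f_{T^±}`):
`∑_{α⁻,α⁺} sign(α⁻) sign(α⁺) Mon(α⁻ · α⁺ · (σb · T⁺))`, where the `c`-th copy
of `Sym (r p)` in `G⁺` permutes the entries of the `c`-th column of `T⁺_p`
among its rows, and the `c`-th copy of `Sym (r q)` in `G⁻` permutes the second
entries of the labels of the boxes of `T⁺` linked to the `c`-th column
of `T⁻_q`. -/
noncomputable def semiInvGen {Q : QuiverData} {wp wm : Fin Q.n → ℕ}
    (L : GLinkedPair Q wp wm)
    (σb : (Σ p : Fin Q.n, Fin (Q.r p) × Fin (wp p)) →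
      (Σ p : Fin Q.n, Fin (Q.r p) × Fin (wp p))) : QPoly Q :=
  ∑ αm : (p : Fin Q.n) → Fin (wm p) → Equiv.Perm (Fin (Q.r p)),
    ∑ αp : (p : Fin Q.n) → Fin (wp p) → Equiv.Perm (Fin (Q.r p)),
      ((∏ p, ∏ c, (Equiv.Perm.sign (αm p c) : ℤ)) *
        ∏ p, ∏ c, (Equiv.Perm.sign (αp p c) : ℤ)) •
        ∏ p : Fin Q.n, ∏ l : Fin (Q.r p), ∏ c : Fin (wp p),
          pathMat Q
            (L.Tp (σb ⟨p, (l, c)⟩).1 (σb ⟨p, (l, c)⟩).2.1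
              (σb ⟨p, (l, c)⟩).2.2).1.1
            ⟨p, αp p c l⟩
            ⟨(L.link (σb ⟨p, (l, c)⟩)).1,
              αm (L.link (σb ⟨p, (l, c)⟩)).1 (L.link (σb ⟨p, (l, c)⟩)).2.2
                ((L.link (σb ⟨p, (l, c)⟩)).2.1)⟩

/-- The substitution action of a tuple of matrices `g` on the coordinate ring:
`M_a ↦ (g (tgt a))⁻¹ * M_a * g (src a)`. -/
noncomputable def quivAct {Q : QuiverData}
    (g : (p : Fin Q.n) → Matrix (Fin (Q.r p)) (Fin (Q.r p)) ℂ) :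
    QPoly Q →ₐ[ℂ] QPoly Q :=
  MvPolynomial.aeval fun v : QVar Q =>
    ∑ j' : Fin (Q.r (Q.atgt v.1)), ∑ k' : Fin (Q.r (Q.asrc v.1)),
      MvPolynomial.C ((g (Q.atgt v.1))⁻¹ v.2.1 j' * g (Q.asrc v.1) k' v.2.2) *
        MvPolynomial.X ⟨v.1, (j', k')⟩

/-- `f` is a semi-invariant of weight `w : Fin Q.n → ℤ` for the action of
`GL(r) = ∏ p, GL(r p, ℂ)`. -/
def IsQSemiInvariant {Q : QuiverData} (f : QPoly Q) (w : Fin Q.n → ℤ) : Prop :=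
  ∀ g : (p : Fin Q.n) → Matrix (Fin (Q.r p)) (Fin (Q.r p)) ℂ,
    (∀ p, IsUnit (g p).det) →
      quivAct g f = MvPolynomial.C (∏ p, (g p).det ^ w p) * f

/-- A linked pair is weakly semi-standard (with respect to an enumeration
`idx` of the paths of `Q`): in each tableau of `T⁺` and of `T⁻`, the first
entries of the labels are weakly increasing along each row and weakly
increasing down each column. -/
def IsWeaklySemiStandard {Q : QuiverData} {wp wm : Fin Q.n → ℕ}
    (idx : QPath Q → ℕ) (L : GLinkedPair Q wp wm) : Prop :=
  (∀ (p : Fin Q.n) (l : Fin (Q.r p)) (c c' : Fin (wp p)), c ≤ c' →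
    idx (L.Tp p l c).1.1 ≤ idx (L.Tp p l c').1.1) ∧
  (∀ (p : Fin Q.n) (c : Fin (wp p)) (l l' : Fin (Q.r p)), l ≤ l' →
    idx (L.Tp p l c).1.1 ≤ idx (L.Tp p l' c).1.1) ∧
  (∀ (p : Fin Q.n) (l : Fin (Q.r p)) (c c' : Fin (wm p)), c ≤ c' →
    idx (L.Tm p l c).1.1 ≤ idx (L.Tm p l c').1.1) ∧
  (∀ (p : Fin Q.n) (c : Fin (wm p)) (l l' : Fin (Q.r p)), l ≤ l' →
    idx (L.Tm p l c).1.1 ≤ idx (L.Tm p l' c).1.1)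

/-!
Move the boxes of `T^+` and of `T^-` around inside their tableaux, letting paths and link travel
along. As a function of the resulting filling of a single rectangle, `f_{T^±}` is an
antisymmetrization over the column permutations of that rectangle. Hence it alternates under
permutations within columns, and its alternating sum over the permutations of any set of more than
`r_p` boxes vanishes: each column permutation sends two of these boxes to the same row, and the
corresponding transposition cancels the terms in pairs.

These two properties suffice for straightening. After sorting the columns, a descent in row `l`
between columns `c < c'` yields the Garnir relation of the lower part of column `c` and the upper
part of column `c'`. Its terms that preserve the columns are all equal to the given one, so in
characteristic zero the latter is a combination of the others. By the rearrangement inequality those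
others have a strictly larger column-weighted sum of path numbers, so the process terminates.

Vertices are treated one at a time, and `T^-` after `T^+`: the paths in the boxes of `T^+` do not
depend on the filling of `T^-`, and conversely, so what has been sorted stays sorted.
-/

open Equiv.Perm in
theorem sum_sign_smul_eq_zero_of_mul_swap {β V : Type*} [Fintype β] [DecidableEq β]
    [AddCommGroup V] {f : Equiv.Perm β → V} {x y : β} (hxy : x ≠ y)
    (hf : ∀ τ, f (τ * Equiv.swap x y) = f τ) : ∑ τ, sign τ • f τ = 0 := by
  refine Finset.sum_involution (fun τ _ => τ * Equiv.swap x y) (fun τ _ => ?_) (fun τ _ _ => ?_)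
    (fun _ _ => Finset.mem_univ _) (fun τ _ => Equiv.mul_swap_mul_self x y τ)
  · simp [hf, sign_swap hxy]
  · simpa [Equiv.swap_eq_one_iff] using hxy

theorem exists_apply_perm_lt {β γ : Type*} [Finite β] [AddCommMonoid γ] [LinearOrder γ]
    [IsOrderedCancelAddMonoid γ] {τ : Equiv.Perm β} {f : β → γ} (h : ∃ b, f (τ b) ≠ f b) :
    ∃ b, f (τ b) < f b := by
  have := Fintype.ofFinite β
  by_contra! hle
  obtain ⟨b, hb⟩ := h
  exact hb ((Finset.sum_eq_sum_iff_of_le fun b _ => hle b).1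
    (Equiv.sum_comp τ f).symm b (Finset.mem_univ b)).symm

theorem exists_nat_rank {β α : Type*} [Finite β] [LinearOrder α] (g : β → α) :
    ∃ h : β → ℕ, ∀ b b', h b ≤ h b' ↔ g b ≤ g b' := by
  have := Fintype.ofFinite (Set.range g)
  let e := Fintype.orderIsoFinOfCardEq (Set.range g) rfl
  exact ⟨fun b => e.symm ⟨g b, b, rfl⟩, fun b b' => Fin.le_def.symm.trans e.symm.le_iff_le⟩

section Rectangle

variable {r w : ℕ}

/-- The column-weighted sum of a filling of a rectangle, the quantity which the straightening
algorithm increases: it is large when the large entries stand far to the right. -/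
def columnWeight (f : Fin r × Fin w → ℕ) : ℕ := ∑ b, f b * b.2

theorem columnWeight_comp_of_snd_eq (f : Fin r × Fin w → ℕ) {τ : Equiv.Perm (Fin r × Fin w)}
    (hτ : ∀ b, (τ b).2 = b.2) : columnWeight (f ∘ τ) = columnWeight f := by
  rw [columnWeight, columnWeight, ← Equiv.sum_comp τ fun b => f b * b.2]
  simp only [Function.comp_apply, hτ]

theorem columnWeight_lt_comp {f : Fin r × Fin w → ℕ} {A : Finset (Fin r × Fin w)}
    {τ : Equiv.Perm (Fin r × Fin w)} (hf : AntivaryOn f (fun b => (b.2 : ℕ)) A)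
    (hτ : ∀ b ∉ A, τ b = b) (hfτ : ¬AntivaryOn (f ∘ τ) (fun b => (b.2 : ℕ)) A) :
    columnWeight f < columnWeight (f ∘ τ) := by
  have hsupport : {b | τ b ≠ b} ⊆ (A : Set (Fin r × Fin w)) := fun b hb =>
    by_contra fun hbA => hb (hτ b hbA)
  have hcompl : ∑ b ∈ Aᶜ, f (τ b) * b.2 = ∑ b ∈ Aᶜ, f b * b.2 :=
    Finset.sum_congr rfl fun b hb => by rw [hτ b (Finset.mem_compl.1 hb)]
  simp only [columnWeight, Function.comp_apply, ← Finset.sum_add_sum_compl A, hcompl]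
  exact Nat.add_lt_add_right ((hf.sum_mul_lt_sum_comp_perm_mul_iff hsupport).2 hfτ) _

/-- The boxes of a Garnir relation at row `l` and columns `c`, `c'`: the part of column `c` from
row `l` downwards and the part of column `c'` down to row `l`. -/
def garnirBoxes (l : Fin r) (c c' : Fin w) : Finset (Fin r × Fin w) :=
  Finset.Ici l ×ˢ {c} ∪ Finset.Iic l ×ˢ {c'}

theorem mem_garnirBoxes {l : Fin r} {c c' : Fin w} {b : Fin r × Fin w} :
    b ∈ garnirBoxes l c c' ↔ l ≤ b.1 ∧ b.2 = c ∨ b.1 ≤ l ∧ b.2 = c' := by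
  simp only [garnirBoxes, Finset.mem_union, Finset.mem_product, Finset.mem_Ici, Finset.mem_Iic,
    Finset.mem_singleton]

theorem card_garnirBoxes (l : Fin r) {c c' : Fin w} (hc : c ≠ c') :
    (garnirBoxes l c c').card = r + 1 := by
  rw [garnirBoxes, Finset.card_union_of_disjoint
    (Finset.disjoint_product.2 (Or.inr (by simpa using hc)))]
  simp only [Finset.card_product, Fin.card_Ici, Fin.card_Iic, Finset.card_singleton]
  omega

section GarnirBoxes

variable {f : Fin r × Fin w → ℕ} {l : Fin r} {c c' : Fin w}

theorem apply_lt_apply_of_mem_garnirBoxes (hcols : ∀ c, Monotone fun l => f (l, c))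
    (hc : c < c') (hlt : f (l, c') < f (l, c)) {b b' : Fin r × Fin w}
    (hb : b ∈ garnirBoxes l c c') (hb' : b' ∈ garnirBoxes l c c') (hbb' : b.2 < b'.2) :
    f b' < f b := by
  obtain ⟨i, j⟩ := b
  obtain ⟨i', j'⟩ := b'
  rw [mem_garnirBoxes] at hb hb'
  obtain ⟨hi, rfl⟩ : l ≤ i ∧ j = c := by grind
  obtain ⟨hi', rfl⟩ : i' ≤ l ∧ j' = c' := by grind
  calc f (i', j') ≤ f (l, j') := hcols j' hi'
    _ < f (l, j) := hlt
    _ ≤ f (i, j) := hcols j hi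

theorem columnWeight_lt_comp_of_garnirBoxes (hcols : ∀ c, Monotone fun l => f (l, c))
    (hc : c < c') (hlt : f (l, c') < f (l, c)) {τ : Equiv.Perm (Fin r × Fin w)}
    (hτ : ∀ b ∉ garnirBoxes l c c', τ b = b) (hmove : ∃ b, (τ b).2 ≠ b.2) :
    columnWeight f < columnWeight (f ∘ τ) := by
  have hanti {b b' : Fin r × Fin w} := apply_lt_apply_of_mem_garnirBoxes (b := b) (b' := b')
    hcols hc hlt
  refine columnWeight_lt_comp (fun b hb b' hb' hbb' => (hanti hb hb' hbb').le) hτ fun hcomp => ?_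
  have hmaps : ∀ b ∈ garnirBoxes l c c', τ b ∈ garnirBoxes l c c' := fun b hb =>
    by_contra fun h => h (by rwa [τ.injective (hτ _ h)])
  have hmem : ∀ b, (τ b).2 ≠ b.2 → b ∈ garnirBoxes l c c' := fun b hb =>
    by_contra fun h => hb (by rw [hτ b h])
  obtain ⟨b, hb⟩ : ∃ b, (τ b).2.val < b.2.val :=
    exists_apply_perm_lt (f := fun b : Fin r × Fin w => b.2.val)
      (by simpa only [ne_eq, Fin.val_inj] using hmove)
  obtain ⟨b', hb'⟩ : ∃ b, b.2.val < (τ b).2.val := by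
    obtain ⟨d, hd⟩ := hmove
    obtain ⟨b', hb'⟩ := exists_apply_perm_lt (τ := τ.symm) (f := fun b : Fin r × Fin w => b.2.val)
      ⟨τ d, by simpa [Fin.val_inj] using hd.symm⟩
    exact ⟨τ.symm b', by simpa using hb'⟩
  have hbA := hmem b (Fin.ne_of_lt hb)
  have hbA' := hmem b' (Fin.ne_of_gt hb')
  have hcol := mem_garnirBoxes.1 hbA
  have hcol' := mem_garnirBoxes.1 hbA'
  have hcolτ := mem_garnirBoxes.1 (hmaps b hbA)
  have hcolτ' := mem_garnirBoxes.1 (hmaps b' hbA')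
  have hsource : b'.2 < b.2 := by grind
  have htarget : (τ b).2 < (τ b').2 := by grind
  exact (hcomp hbA' hbA hsource).not_gt (hanti (hmaps b hbA) (hmaps b' hbA') htarget)

end GarnirBoxes

open Equiv.Perm in
/-- A function on the bijective fillings `π` of an `r × w` rectangle by its own boxes, `π d` being
the box placed at position `d`, is a Garnir function if it satisfies the relations defining the
Specht module: it is alternating under permutations within the columns, and its alternating sum over
the permutations of any set of more than `r` boxes vanishes. -/
structure IsGarnir {V : Type*} [AddCommGroup V] (F : Equiv.Perm (Fin r × Fin w) → V) : Prop where
  map_mul_of_snd_eq (π τ : Equiv.Perm (Fin r × Fin w)) :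
    (∀ b, (τ b).2 = b.2) → F (π * τ) = sign τ • F π
  sum_eq_zero (π : Equiv.Perm (Fin r × Fin w)) (A : Finset (Fin r × Fin w)) :
    r < A.card → ∑ τ : Equiv.Perm A, sign τ • F (π * ofSubtype τ) = 0

namespace IsGarnir

variable {K V : Type*} [DivisionRing K] [CharZero K] [AddCommGroup V] [Module K V]
  {F : Equiv.Perm (Fin r × Fin w) → V}

open Equiv.Perm in
theorem mem_of_forall_mul_mem (hF : IsGarnir F) {N : Submodule K V} {A : Finset (Fin r × Fin w)}
    (hA : r < A.card) {π : Equiv.Perm (Fin r × Fin w)}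
    (hN : ∀ τ : Equiv.Perm (Fin r × Fin w), (∀ b ∉ A, τ b = b) → (∃ b, (τ b).2 ≠ b.2) →
      F (π * τ) ∈ N) : F π ∈ N := by
  let S : Finset (Equiv.Perm A) := {τ | ∀ b, (ofSubtype τ b).2 = b.2}
  have hS : ∀ τ ∈ S, sign τ • F (π * ofSubtype τ) = F π := fun τ hτ => by
    rw [hF.map_mul_of_snd_eq π _ (Finset.mem_filter_univ τ |>.1 hτ), sign_ofSubtype, smul_smul,
      Int.units_mul_self, one_smul]
  have hSc : ∑ τ ∈ Sᶜ, sign τ • F (π * ofSubtype τ) ∈ N := by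
    refine N.sum_mem fun τ hτ => N.smul_of_tower_mem _ (hN _ (fun b hb => ?_) ?_)
    · exact ofSubtype_apply_of_not_mem τ hb
    · simpa [S] using hτ
  have hcard : S.card ≠ 0 := Finset.card_ne_zero_of_mem (a := 1) (by simp [S])
  have hsum := hF.sum_eq_zero π A hA
  rw [← Finset.sum_add_sum_compl S, Finset.sum_congr rfl hS, Finset.sum_const,
    ← Nat.cast_smul_eq_nsmul K] at hsum
  rw [← N.smul_mem_iff (Nat.cast_ne_zero (R := K).2 hcard), eq_neg_of_add_eq_zero_left hsum]
  exact N.neg_mem hSc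

theorem mem_span_monotone {α : Type*} [LinearOrder α] (hF : IsGarnir F)
    (g : Fin r × Fin w → α) (π : Equiv.Perm (Fin r × Fin w)) :
    F π ∈ Submodule.span K (F '' {π : Equiv.Perm _ | Monotone (g ∘ π)}) := by
  obtain ⟨h, hg⟩ := exists_nat_rank g
  by_contra hπ
  obtain ⟨ρ, hρ, hmax⟩ := (Set.toFinite {π : Equiv.Perm _ | F π ∉ Submodule.span K
    (F '' {π : Equiv.Perm _ | Monotone (g ∘ π)})}).exists_maximalFor
    (fun π : Equiv.Perm _ => columnWeight (h ∘ π)) _ ⟨π, hπ⟩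
  set N := Submodule.span K (F '' {π : Equiv.Perm _ | Monotone (g ∘ π)})
  let σ : Equiv.Perm (Fin r × Fin w) :=
    Equiv.prodCongrLeft fun c => Tuple.sort fun l => h (ρ (l, c))
  have hσ : ∀ b, (σ b).2 = b.2 := fun _ => rfl
  have hcols : ∀ c, Monotone fun l => (h ∘ (ρ * σ)) (l, c) := fun c =>
    Tuple.monotone_sort fun l => h (ρ (l, c))
  have hρσ : F (ρ * σ) ∉ N := fun hmem => hρ <| by
    have := N.smul_of_tower_mem (Equiv.Perm.sign σ) hmem
    rwa [hF.map_mul_of_snd_eq ρ σ hσ, smul_smul, Int.units_mul_self, one_smul] at this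
  have hweight : columnWeight (h ∘ (ρ * σ)) = columnWeight (h ∘ ρ) :=
    columnWeight_comp_of_snd_eq (h ∘ ρ) hσ
  have hnot : ¬Monotone (h ∘ (ρ * σ)) := fun hmono =>
    hρσ (Submodule.subset_span ⟨_, fun b b' hb => (hg _ _).1 (hmono hb), rfl⟩)
  obtain ⟨l, c, c', hc, hlt⟩ : ∃ l c c', c < c' ∧
      (h ∘ (ρ * σ)) (l, c') < (h ∘ (ρ * σ)) (l, c) := by
    by_contra! hrows
    exact hnot (monotone_prod_iff.2 ⟨fun l => monotone_iff_forall_lt.2 (hrows l), hcols⟩)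
  refine hρσ (hF.mem_of_forall_mul_mem (A := garnirBoxes l c c')
    (by rw [card_garnirBoxes l hc.ne]; exact Nat.lt_succ_self r) fun τ hτ hmove => ?_)
  by_contra hτN
  have hlarger := columnWeight_lt_comp_of_garnirBoxes hcols hc hlt hτ hmove
  rw [hweight] at hlarger
  exact hlarger.not_ge (hmax hτN hlarger.le)

end IsGarnir

end Rectangle

section RectangleTuples

variable {ι : Type*} {r w : ι → ℕ}

/-- The bijective fillings, of each rectangle by its own boxes, of a tuple of `r p × w p`
rectangles. -/
abbrev BoxPerms (r w : ι → ℕ) := ∀ p, Equiv.Perm (Fin (r p) × Fin (w p))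

theorem mem_span_forall_monotone [Finite ι] [DecidableEq ι] {K V α : Type*} [DivisionRing K]
    [CharZero K] [AddCommGroup V] [Module K V] [LinearOrder α] {F : BoxPerms r w → V}
    (hF : ∀ p (π : BoxPerms r w), IsGarnir fun τ => F (π * Pi.mulSingle p τ))
    (g : ∀ p, Fin (r p) × Fin (w p) → α) (π : BoxPerms r w) :
    F π ∈ Submodule.span K (F '' {π | ∀ p, Monotone (g p ∘ π p)}) := by
  suffices ∀ s : Finset ι, F π ∈ Submodule.span K (F '' {π | ∀ p ∈ s, Monotone (g p ∘ π p)}) by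
    obtain ⟨_⟩ := nonempty_fintype ι
    simpa using this Finset.univ
  intro s
  induction s using Finset.induction with
  | empty => exact Submodule.subset_span ⟨π, by simp, rfl⟩
  | insert p s hp ih =>
    refine Submodule.span_le.2 ?_ ih
    rintro _ ⟨ρ, hρ, rfl⟩
    have hmem := (hF p ρ).mem_span_monotone (K := K) (g p ∘ ρ p) 1
    rw [Pi.mulSingle_one, mul_one] at hmem
    refine Submodule.span_mono ?_ hmem
    rintro _ ⟨τ, hτ, rfl⟩
    refine ⟨ρ * Pi.mulSingle p τ, Finset.forall_mem_insert .. |>.2 ⟨?_, fun q hq => ?_⟩, rfl⟩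
    · rw [Pi.mul_apply, Pi.mulSingle_eq_same]
      exact hτ
    · rw [Pi.mul_apply, Pi.mulSingle_eq_of_ne (ne_of_mem_of_not_mem hq hp), mul_one]
      exact hρ q hq

/-- The group `∏ p, Sym (r p) ^ w p` acting on the columns of a tuple of `r p × w p` tableaux,
which is `G^+` for `w = w^+` and `G^-` for `w = w^-`. -/
abbrev ColumnPerms (r w : ι → ℕ) := ∀ p, Fin (w p) → Equiv.Perm (Fin (r p))

variable [Fintype ι]

namespace ColumnPerms

/-- The product of the signs of the components of a tuple of column permutations. -/
def sign (α : ColumnPerms r w) : ℤˣ := ∏ p, ∏ c, Equiv.Perm.sign (α p c)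

theorem sign_mul (α β : ColumnPerms r w) : (α * β).sign = α.sign * β.sign := by
  simp only [sign, Pi.mul_apply, map_mul, Finset.prod_mul_distrib]

theorem sign_mulSingle [DecidableEq ι] (p : ι) (κ : Fin (w p) → Equiv.Perm (Fin (r p))) :
    sign (Pi.mulSingle p κ : ColumnPerms r w) = Equiv.Perm.sign (Equiv.prodCongrLeft κ) := by
  rw [Equiv.Perm.sign_prodCongrLeft, sign, Fintype.prod_eq_single p fun q hq => by
    simp [Pi.mulSingle_eq_of_ne hq], Pi.mulSingle_eq_same]

/-- The row to which each box is moved by a tuple of column permutations. -/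
def row (α : ColumnPerms r w) (p : ι) (b : Fin (r p) × Fin (w p)) : Fin (r p) := α p b.2 b.1

/-- The image of a box, as an index of the block matrices `pathMat`. -/
def rowIndex (α : ColumnPerms r w) (b : Σ p, Fin (r p) × Fin (w p)) : Σ p, Fin (r p) :=
  ⟨b.1, α.row b.1 b.2⟩

end ColumnPerms

theorem exists_eq_prodCongrLeft {β γ : Type*} [Finite γ] {τ : Equiv.Perm (γ × β)}
    (hτ : ∀ b, (τ b).2 = b.2) : ∃ κ : β → Equiv.Perm γ, τ = Equiv.prodCongrLeft κ := by
  have hinj (c : β) : Function.Injective fun l => (τ (l, c)).1 := fun l l' hl =>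
    congrArg Prod.fst (τ.injective (Prod.ext hl ((hτ (l, c)).trans (hτ (l', c)).symm)))
  refine ⟨fun c => Equiv.ofBijective _ (Finite.injective_iff_bijective.1 (hinj c)), ?_⟩
  ext1 b
  exact Prod.ext rfl (hτ b)

variable [DecidableEq ι]

/-- The signed sum, over all tuples `α` of column permutations, of the values of `Φ` at the maps
sending each box `b` to the row to which `α` moves the position of `b` in the filling `π`. Every
`f_{T^±}` is of this form, in the filling of `T^+` as well as in that of `T^-`. -/
def antisymmetrize {V : Type*} [AddCommGroup V]
    (Φ : (∀ p, Fin (r p) × Fin (w p) → Fin (r p)) → V) (π : BoxPerms r w) : V :=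
  ∑ α : ColumnPerms r w, α.sign • Φ fun p b => α.row p ((π p)⁻¹ b)

section Antisymmetrize

variable {V : Type*} [AddCommGroup V] (Φ : (∀ p, Fin (r p) × Fin (w p) → Fin (r p)) → V)

theorem antisymmetrize_mul_mulSingle_prodCongrLeft (π : BoxPerms r w) (p : ι)
    (κ : Fin (w p) → Equiv.Perm (Fin (r p))) :
    antisymmetrize Φ (π * Pi.mulSingle p (Equiv.prodCongrLeft κ)) =
      Equiv.Perm.sign (Equiv.prodCongrLeft κ) • antisymmetrize Φ π := by
  have hrow (α : ColumnPerms r w) (q : ι) (b : Fin (r q) × Fin (w q)) :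
      ColumnPerms.row (α * Pi.mulSingle p κ) q
        (((π * Pi.mulSingle p (Equiv.prodCongrLeft κ) : BoxPerms r w) q)⁻¹ b) =
      α.row q ((π q)⁻¹ b) := by
    obtain rfl | hq := eq_or_ne q p
    · obtain ⟨d, hd⟩ := (Equiv.prodCongrLeft κ).surjective ((π q)⁻¹ b)
      rw [Pi.mul_apply, Pi.mulSingle_eq_same, mul_inv_rev, Equiv.Perm.mul_apply, ← hd,
        Equiv.Perm.inv_def, Equiv.symm_apply_apply]
      simp [ColumnPerms.row]
    · simp [ColumnPerms.row, Pi.mulSingle_eq_of_ne hq]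
  rw [antisymmetrize, ← Equiv.sum_comp (Equiv.mulRight (Pi.mulSingle p κ)), antisymmetrize,
    Finset.smul_sum]
  refine Finset.sum_congr rfl fun α _ => ?_
  simp only [Equiv.coe_mulRight, hrow, ColumnPerms.sign_mul, ColumnPerms.sign_mulSingle, smul_smul,
    mul_comm]

theorem sum_sign_smul_antisymmetrize_eq_zero (π : BoxPerms r w) (p : ι)
    {A : Finset (Fin (r p) × Fin (w p))} (hA : r p < A.card) :
    ∑ τ : Equiv.Perm A, Equiv.Perm.sign τ •
      antisymmetrize Φ (π * Pi.mulSingle p (Equiv.Perm.ofSubtype τ)) = 0 := by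
  simp only [antisymmetrize, Finset.smul_sum]
  rw [Finset.sum_comm]
  refine Finset.sum_eq_zero fun α _ => ?_
  simp only [smul_comm _ α.sign, ← Finset.smul_sum]
  obtain ⟨x, y, hxy, hrow⟩ := Fintype.exists_ne_map_eq_of_card_lt
    (fun b : A => α.row p b) (by simpa using hA)
  have hswap (b : Fin (r p) × Fin (w p)) : α.row p (Equiv.swap x.1 y.1 b) = α.row p b := by
    rw [Equiv.swap_apply_def]
    split_ifs with hx hy
    · rw [hx, hrow]
    · rw [hy, hrow]
    · rfl
  have hinv (τ : Equiv.Perm A) : (fun q b => α.row q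
      (((π * Pi.mulSingle p (Equiv.Perm.ofSubtype (τ * Equiv.swap x y)) :
        BoxPerms r w) q)⁻¹ b)) = fun q b => α.row q
      (((π * Pi.mulSingle p (Equiv.Perm.ofSubtype τ) : BoxPerms r w) q)⁻¹ b) := by
    funext q b
    obtain rfl | hq := eq_or_ne q p
    · simp [Equiv.Perm.ofSubtype_swap_eq, hswap]
    · simp [Pi.mulSingle_eq_of_ne hq]
  rw [sum_sign_smul_eq_zero_of_mul_swap hxy fun τ => congrArg Φ (hinv τ), smul_zero]

theorem isGarnir_antisymmetrize (p : ι) (π : BoxPerms r w) :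
    IsGarnir fun τ => antisymmetrize Φ (π * Pi.mulSingle p τ) where
  map_mul_of_snd_eq ρ τ hτ := by
    obtain ⟨κ, rfl⟩ := exists_eq_prodCongrLeft hτ
    rw [Pi.mulSingle_mul, ← mul_assoc, antisymmetrize_mul_mulSingle_prodCongrLeft]
  sum_eq_zero ρ A hA := by
    simp only [Pi.mulSingle_mul, ← mul_assoc]
    exact sum_sign_smul_antisymmetrize_eq_zero Φ _ p hA

theorem antisymmetrize_mem_span_monotone (K : Type*) {α : Type*} [DivisionRing K] [CharZero K]
    [Module K V] [LinearOrder α] (g : ∀ p, Fin (r p) × Fin (w p) → α) (π : BoxPerms r w) :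
    antisymmetrize Φ π ∈
      Submodule.span K (antisymmetrize Φ '' {π | ∀ p, Monotone (g p ∘ π p)}) :=
  mem_span_forall_monotone (isGarnir_antisymmetrize Φ) g π

end Antisymmetrize

end RectangleTuples

section LinkedPairs

variable {Q : QuiverData} {wp wm : Fin Q.n → ℕ}

namespace GLinkedPair

/-- The path in the label of a box of the target tableaux `T^+`. -/
def path (L : GLinkedPair Q wp wm) (b : Σ p, Fin (Q.r p) × Fin (wp p)) : QPath Q :=
  (L.Tp b.1 b.2.1 b.2.2).1.1

theorem tgtV_path (L : GLinkedPair Q wp wm) (b : Σ p, Fin (Q.r p) × Fin (wp p)) :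
    (L.path b).tgtV = b.1 :=
  (L.Tp b.1 b.2.1 b.2.2).2

/-- The linked pair with path labels `P` on the boxes of `T^+` and link `e`; these data determine
the second entries of the labels and the whole of `T^-`. -/
def ofPathLink (P : (Σ p, Fin (Q.r p) × Fin (wp p)) → QPath Q)
    (e : (Σ p, Fin (Q.r p) × Fin (wp p)) ≃ Σ p, Fin (Q.r p) × Fin (wm p))
    (htgt : ∀ b, (P b).tgtV = b.1) (hsrc : ∀ b, (e b).1 = (P b).srcV) : GLinkedPair Q wp wm where
  Tp p l c := ⟨⟨P ⟨p, l, c⟩, Fin.cast (by rw [hsrc]) (e ⟨p, l, c⟩).2.1⟩, htgt _⟩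
  Tm q j c := ⟨⟨P (e.symm ⟨q, j, c⟩), Fin.cast (by rw [htgt]) (e.symm ⟨q, j, c⟩).2.1⟩, by
    rw [← hsrc, e.apply_symm_apply]⟩
  link := e
  link_vertex := hsrc
  link_row _ := rfl
  link_path b := congrArg P (e.symm_apply_apply b)
  link_secondEntry b :=
    congrArg (fun x : Σ p, Fin (Q.r p) × Fin (wp p) => (x.2.1 : ℕ)) (e.symm_apply_apply b)

/-- The linked pair obtained by moving the boxes of `T^+` by `πp` and those of `T^-` by `πm`
within their tableaux, links and paths travelling along: position `b` of the new `T^+` holds the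
path at `πp b`, and position `d` of the new `T^-` holds the path at `πm d`. -/
def permute (L : GLinkedPair Q wp wm) (πp : BoxPerms Q.r wp) (πm : BoxPerms Q.r wm) :
    GLinkedPair Q wp wm :=
  ofPathLink (fun b => L.path (Equiv.Perm.sigmaCongrRight πp b))
    (((Equiv.Perm.sigmaCongrRight πp).trans L.link).trans (Equiv.Perm.sigmaCongrRight πm).symm)
    (fun b => L.tgtV_path (Equiv.Perm.sigmaCongrRight πp b))
    (fun b => L.link_vertex (Equiv.Perm.sigmaCongrRight πp b))

end GLinkedPair

theorem semiInvGen_id_eq (L : GLinkedPair Q wp wm) :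
    semiInvGen L id = ∑ αm : ColumnPerms Q.r wm, ∑ αp : ColumnPerms Q.r wp,
      (αm.sign * αp.sign) •
        ∏ b, pathMat Q (L.path b) (αp.rowIndex b) (αm.rowIndex (L.link b)) := by
  refine Finset.sum_congr rfl fun αm _ => Finset.sum_congr rfl fun αp _ => ?_
  simp only [Fintype.prod_sigma, Fintype.prod_prod_type, Units.smul_def, Units.val_mul,
    ColumnPerms.sign, Units.coe_prod]
  rfl

theorem semiInvGen_permute (L : GLinkedPair Q wp wm) (πp : BoxPerms Q.r wp)
    (πm : BoxPerms Q.r wm) :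
    semiInvGen (L.permute πp πm) id =
      ∑ αm : ColumnPerms Q.r wm, ∑ αp : ColumnPerms Q.r wp, (αm.sign * αp.sign) •
        ∏ b, pathMat Q (L.path b) (αp.rowIndex ((Equiv.Perm.sigmaCongrRight πp).symm b))
          (αm.rowIndex ((Equiv.Perm.sigmaCongrRight πm).symm (L.link b))) := by
  rw [semiInvGen_id_eq]
  refine Finset.sum_congr rfl fun αm _ => Finset.sum_congr rfl fun αp _ => ?_
  congr 1
  refine (Finset.prod_congr rfl fun b _ => ?_).trans <|
    Equiv.prod_comp (Equiv.Perm.sigmaCongrRight πp) fun b =>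
      pathMat Q (L.path b) (αp.rowIndex ((Equiv.Perm.sigmaCongrRight πp).symm b))
        (αm.rowIndex ((Equiv.Perm.sigmaCongrRight πm).symm (L.link b)))
  rw [Equiv.symm_apply_apply]
  rfl

theorem semiInvGen_permute_one (L : GLinkedPair Q wp wm) :
    semiInvGen (L.permute 1 1) id = semiInvGen L id := by
  rw [semiInvGen_permute, semiInvGen_id_eq]
  rfl

theorem exists_semiInvGen_permute_eq_antisymmetrize_left (L : GLinkedPair Q wp wm)
    (πm : BoxPerms Q.r wm) :
    ∃ Φ, ∀ πp, semiInvGen (L.permute πp πm) id = antisymmetrize Φ πp := by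
  refine ⟨fun u => ∑ αm : ColumnPerms Q.r wm, αm.sign • ∏ b, pathMat Q (L.path b) ⟨b.1, u b.1 b.2⟩
    (αm.rowIndex ((Equiv.Perm.sigmaCongrRight πm).symm (L.link b))), fun πp => ?_⟩
  rw [semiInvGen_permute, Finset.sum_comm]
  refine Finset.sum_congr rfl fun αp _ => ?_
  simp only [Finset.smul_sum, mul_smul, smul_comm αp.sign]
  rfl

theorem exists_semiInvGen_permute_eq_antisymmetrize_right (L : GLinkedPair Q wp wm)
    (πp : BoxPerms Q.r wp) :
    ∃ Φ, ∀ πm, semiInvGen (L.permute πp πm) id = antisymmetrize Φ πm := by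
  refine ⟨fun u => ∑ αp : ColumnPerms Q.r wp, αp.sign • ∏ b, pathMat Q (L.path b)
    (αp.rowIndex ((Equiv.Perm.sigmaCongrRight πp).symm b))
      ⟨(L.link b).1, u (L.link b).1 (L.link b).2⟩, fun πm => ?_⟩
  rw [semiInvGen_permute]
  refine Finset.sum_congr rfl fun αm _ => ?_
  simp only [Finset.smul_sum, mul_smul]
  rfl

theorem isWeaklySemiStandard_permute {idx : QPath Q → ℕ} {L : GLinkedPair Q wp wm}
    {πp : BoxPerms Q.r wp} {πm : BoxPerms Q.r wm}
    (hp : ∀ p, Monotone ((fun b => idx (L.path ⟨p, b⟩)) ∘ πp p))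
    (hm : ∀ q, Monotone ((fun b => idx (L.path (L.link.symm ⟨q, b⟩))) ∘ πm q)) :
    IsWeaklySemiStandard idx (L.permute πp πm) := by
  have hTm (q j c) : ((L.permute πp πm).Tm q j c).1.1 =
      L.path (L.link.symm ⟨q, πm q (j, c)⟩) :=
    congrArg L.path ((Equiv.Perm.sigmaCongrRight πp).apply_symm_apply _)
  simp only [IsWeaklySemiStandard, hTm]
  exact ⟨fun p l _ _ hc => (monotone_prod_iff.1 (hp p)).1 l hc,
    fun p c _ _ hl => (monotone_prod_iff.1 (hp p)).2 c hl,
    fun q j _ _ hc => (monotone_prod_iff.1 (hm q)).1 j hc,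
    fun q c _ _ hj => (monotone_prod_iff.1 (hm q)).2 c hj⟩

end LinkedPairs

theorem statement5_general (Q : QuiverData) (wp wm : Fin Q.n → ℕ) (idx : QPath Q → ℕ)
    (L : GLinkedPair Q wp wm) :
    semiInvGen L id ∈ Submodule.span ℂ
      {f : QPoly Q | ∃ U : GLinkedPair Q wp wm,
        IsWeaklySemiStandard idx U ∧ f = semiInvGen U id} := by
  obtain ⟨Φp, hΦp⟩ := exists_semiInvGen_permute_eq_antisymmetrize_left L 1
  rw [← semiInvGen_permute_one L, hΦp]
  refine Submodule.span_le.2 ?_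
    (antisymmetrize_mem_span_monotone Φp ℂ (fun p b => idx (L.path ⟨p, b⟩)) 1)
  rintro _ ⟨πp, hp, rfl⟩
  obtain ⟨Φm, hΦm⟩ := exists_semiInvGen_permute_eq_antisymmetrize_right L πp
  rw [← hΦp, hΦm]
  refine Submodule.span_mono ?_
    (antisymmetrize_mem_span_monotone Φm ℂ (fun q b => idx (L.path (L.link.symm ⟨q, b⟩))) 1)
  rintro _ ⟨πm, hm, rfl⟩
  exact ⟨L.permute πp πm, isWeaklySemiStandard_permute hp hm, (hΦm πm).symm⟩

/-- For every linked pair of tableaux tuples, the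
semi-invariant `f_{T^±}` lies in the `ℂ`-linear span of the semi-invariants
attached to weakly semi-standard linked pairs of the same weight
decomposition (for any enumeration of the paths of `Q`). -/
theorem statement5 (Q : QuiverData) (hacyc : IsAcyclic Q)
    (hr : ∀ p, 0 < Q.r p) (wp wm : Fin Q.n → ℕ)
    (idx : QPath Q → ℕ) (hidx : Function.Injective idx)
    (L : GLinkedPair Q wp wm) :
    semiInvGen L id ∈ Submodule.span ℂ
      {f : QPoly Q | ∃ U : GLinkedPair Q wp wm,
        IsWeaklySemiStandard idx U ∧ f = semiInvGen U id} :=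
  statement5_general Q wp wm idx L

end QuiverSAGBI
end

section
/- Let f be a nonzero semi-invariant of the generalized Kronecker quiver. Then there exists a semi-standard linked tableaux pair (T^-, T^+, σ) such that LM(f) = Mon(T^+) = Mon(T^-). -/
namespace QuiverSAGBI

/-- The variable `x^i_{jk}`: the `(j,k)` entry of the generic matrix `M_i`. -/
abbrev KVar (K r0 r1 : ℕ) := Fin K × Fin r1 × Fin r0

/-- The coordinate ring of the representation space of the generalized
Kronecker quiver with `K` arrows and dimension vector `(r0, r1)`. -/
abbrev KPoly (K r0 r1 : ℕ) := MvPolynomial (KVar K r0 r1) ℂ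

/-- `x_v` is a greater variable than `x_w`:  `v.1 < w.1`, or `v.1 = w.1` and
`v.2.1 < w.2.1`, or these agree and `v.2.2 < w.2.2`. -/
def VarGT {K r0 r1 : ℕ} (v w : KVar K r0 r1) : Prop :=
  v.1 < w.1 ∨ (v.1 = w.1 ∧ (v.2.1 < w.2.1 ∨ (v.2.1 = w.2.1 ∧ v.2.2 < w.2.2)))

/-- The monomial with exponent vector `a` is smaller than the one with exponent
vector `b` in the lexicographic term order: at the most significant variable
where they differ, `a` has the smaller exponent. -/
def MonLT {K r0 r1 : ℕ} (a b : KVar K r0 r1 →₀ ℕ) : Prop :=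
  ∃ v, a v < b v ∧ ∀ w, VarGT w v → a w = b w

/-- `mo` is the leading monomial (exponent vector) of `f`. -/
def IsLM {K r0 r1 : ℕ} (f : KPoly K r0 r1) (mo : KVar K r0 r1 →₀ ℕ) : Prop :=
  mo ∈ f.support ∧ ∀ m' ∈ f.support, m' = mo ∨ MonLT m' mo

/-- The substitution action of a pair of matrices `(g, h)` on the coordinate
ring: `x^i_{jk} ↦ ∑ (h⁻¹)_{j j'} x^i_{j'k'} g_{k' k}`, i.e. `M_i ↦ h⁻¹ M_i g`. -/
noncomputable def glAct {K r0 r1 : ℕ} (g : Matrix (Fin r0) (Fin r0) ℂ)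
    (h : Matrix (Fin r1) (Fin r1) ℂ) : KPoly K r0 r1 →ₐ[ℂ] KPoly K r0 r1 :=
  MvPolynomial.aeval fun v : KVar K r0 r1 =>
    ∑ j' : Fin r1, ∑ k' : Fin r0,
      MvPolynomial.C (h⁻¹ v.2.1 j' * g k' v.2.2) * MvPolynomial.X (v.1, j', k')

/-- `f` is a semi-invariant of weight `(w0, w1)`. -/
def IsSemiInvariant {K r0 r1 : ℕ} (f : KPoly K r0 r1) (w0 w1 : ℤ) : Prop :=
  ∀ (g : Matrix (Fin r0) (Fin r0) ℂ) (h : Matrix (Fin r1) (Fin r1) ℂ),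
    IsUnit g.det → IsUnit h.det →
      glAct g h f = MvPolynomial.C (g.det ^ w0 * h.det ^ w1) * f

/-- The semi-invariant ring: the linear span of all semi-invariants. -/
noncomputable def semiInvariantRing (K r0 r1 : ℕ) : Submodule ℂ (KPoly K r0 r1) :=
  Submodule.span ℂ {f | ∃ w0 w1 : ℤ, IsSemiInvariant f w0 w1}

/-- A linked tableaux pair for the generalized Kronecker quiver:
`Tm` is the tableau `T⁻` (with `r0` rows and `cm` columns, labels `(i,q)`),
`Tp` is the tableau `T⁺` (with `r1` rows and `cp` columns, labels `(i,p)`),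
and `link` is a bijection of boxes sending the box labeled `(i,q)` in row `p`
of `T⁻` to a box labeled `(i,p)` lying in row `q` of `T⁺`. -/
structure LinkedPair (K r0 r1 cm cp : ℕ) where
  Tm : Fin r0 → Fin cm → Fin K × Fin r1
  Tp : Fin r1 → Fin cp → Fin K × Fin r0
  link : Fin r0 × Fin cm ≃ Fin r1 × Fin cp
  link_row : ∀ p c, (link (p, c)).1 = (Tm p c).2
  link_label : ∀ p c, Tp (link (p, c)).1 (link (p, c)).2 = ((Tm p c).1, p)

/-- The exponent vector of `Mon(T⁺)`: a box labeled `(i,k)` in row `q` of `T⁺`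
contributes the variable `x^i_{qk}`. -/
noncomputable def monExpP {K r0 r1 cm cp : ℕ} (L : LinkedPair K r0 r1 cm cp) :
    KVar K r0 r1 →₀ ℕ :=
  ∑ q : Fin r1, ∑ c : Fin cp, Finsupp.single ((L.Tp q c).1, q, (L.Tp q c).2) 1

/-- The exponent vector of `Mon(T⁻)`: a box labeled `(i,j)` in row `p` of `T⁻`
contributes the variable `x^i_{jp}`. -/
noncomputable def monExpM {K r0 r1 cm cp : ℕ} (L : LinkedPair K r0 r1 cm cp) :
    KVar K r0 r1 →₀ ℕ :=
  ∑ p : Fin r0, ∑ c : Fin cm, Finsupp.single ((L.Tm p c).1, (L.Tm p c).2, p) 1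

/-- The semi-invariant `f_{T^±}` attached to a linked tableaux pair:
`∑_{α⁻, α⁺} sign(α⁻) sign(α⁺) Mon(α⁻ · α⁺ · T⁺)`, where `α⁺` permutes the
entries of each column of `T⁺` among its rows and `α⁻` permutes the second
entries of the labels of the boxes of `T⁺` linked to each column of `T⁻`. -/
noncomputable def pairPoly {K r0 r1 cm cp : ℕ} (L : LinkedPair K r0 r1 cm cp) :
    KPoly K r0 r1 :=
  ∑ αm : Fin cm → Equiv.Perm (Fin r0), ∑ αp : Fin cp → Equiv.Perm (Fin r1),
    ((∏ l, (Equiv.Perm.sign (αm l) : ℤ)) * ∏ c, (Equiv.Perm.sign (αp c) : ℤ)) •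
      ∏ p : Fin r0, ∏ l : Fin cm,
        MvPolynomial.X
          ((L.Tm p l).1, αp (L.link (p, l)).2 (L.link (p, l)).1, αm l p)

/-- The order on labels: `(i,p) ≤ (j,q)` iff `i < j`, or `i = j` and `p ≤ q`. -/
def LabelLE {K n : ℕ} (a b : Fin K × Fin n) : Prop :=
  a.1 < b.1 ∨ (a.1 = b.1 ∧ a.2 ≤ b.2)

/-- Strict version of the label order. -/
def LabelLT {K n : ℕ} (a b : Fin K × Fin n) : Prop :=
  a.1 < b.1 ∨ (a.1 = b.1 ∧ a.2 < b.2)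

/-- A rectangular tableau is semi-standard if its entries are weakly increasing
along each row and strictly increasing down each column. -/
def IsSemiStandardTab {rows cols K n : ℕ}
    (T : Fin rows → Fin cols → Fin K × Fin n) : Prop :=
  (∀ (i : Fin rows) (c c' : Fin cols), c ≤ c' → LabelLE (T i c) (T i c')) ∧
  (∀ (c : Fin cols) (i i' : Fin rows), i < i' → LabelLT (T i c) (T i' c))

/-- The link is semi-standard: boxes with equal labels in the same row of `T⁻`
are matched with their partners in `T⁺` in a left-to-right
order-preserving way. -/
def IsSemiStandardLink {K r0 r1 cm cp : ℕ}
    (L : LinkedPair K r0 r1 cm cp) : Prop :=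
  ∀ (p : Fin r0) (c c' : Fin cm), L.Tm p c = L.Tm p c' → c < c' →
    (L.link (p, c)).2 < (L.link (p, c')).2

/-- A semi-standard linked tableaux pair: both tableaux and the link are
semi-standard. -/
def IsSemiStandardPair {K r0 r1 cm cp : ℕ}
    (L : LinkedPair K r0 r1 cm cp) : Prop :=
  IsSemiStandardTab L.Tm ∧ IsSemiStandardTab L.Tp ∧ IsSemiStandardLink L

/-- A (nonempty) semi-standard linked tableaux pair is primitive if its leading
monomial is not the product of the leading monomials of two (nonempty)
semi-standard linked tableaux pairs. -/
def IsPrimitive {K r0 r1 cm cp : ℕ} (L : LinkedPair K r0 r1 cm cp) : Prop :=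
  IsSemiStandardPair L ∧ 0 < cm ∧
    ¬∃ (cm1 cp1 cm2 cp2 : ℕ) (L1 : LinkedPair K r0 r1 cm1 cp1)
        (L2 : LinkedPair K r0 r1 cm2 cp2) (m m1 m2 : KVar K r0 r1 →₀ ℕ),
        0 < cm1 ∧ 0 < cm2 ∧ IsSemiStandardPair L1 ∧ IsSemiStandardPair L2 ∧
        IsLM (pairPoly L) m ∧ IsLM (pairPoly L1) m1 ∧ IsLM (pairPoly L2) m2 ∧
        m = m1 + m2

/-!
Stack the generic matrices into a single matrix of variables, so that `GL(r0)` acts on its columns;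
stacking their transposes does the same for `GL(r1)`. A semi-invariant `f` is homogeneous of the
same degree in every column, and for columns `x`, `y` it is killed by the polarization
`D = ∑ b, x_b ∂/∂y_b`. Listing the factors of the leading monomial `u` column by column gives a
rectangular tableau with weakly increasing rows, and this tableau is strictly increasing down its
columns precisely when `∑ b ≤ a, u(y_b) ≤ ∑ b < a, u(x_b)` for all `a` and all columns `x` to the
left of `y`.

This inequality is proved by removing the pairs `(x_a, y_a)` from `D` in decreasing lexicographic
order. Let `D^(r+1) g = 0`, let `y_a^n` divide `g`, say `g = y_a^n g'`, and let `d` be the largest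
exponent of `y_a` in `g`. Multiplication by `y_a` raises the order of nilpotency by one, so
`n ≤ r` and `D^(r+1-n) g' = 0`. Since `x_a ∂/∂y_a` kills `g'` after `d - n + 1` steps and commutes
with `D`, the operator `D - x_a ∂/∂y_a` kills `g` after `(r - n) + (d - n) + 1` steps. Restricting
`f` to the monomials of the same degree as `u` in each pair makes `d - n = u(x_a)` for
`n = u(y_a)`, and the inequality is the condition `n ≤ r` at successive steps.
-/

open MvPolynomial

section Derivation

variable {R A : Type*} [CommRing R] [CommRing A] [Algebra R A] (D : Derivation R A A) {x y : A}

theorem iterate_derivation_mul_of_apply_eq_zero (hy : D y = 0) (k : ℕ) (g : A) :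
    D^[k] (y * g) = y * D^[k] g := by
  have semiconj : Function.Semiconj (y * ·) D D := fun g => by simp [hy]
  exact ((semiconj.iterate_right k) g).symm

theorem iterate_succ_derivation_mul (hx : D x = 0) (hy : D y = x) (k : ℕ) (g : A) :
    D^[k + 1] (y * g) = y * D^[k + 1] g + (k + 1) • (x * D^[k] g) := by
  induction k with
  | zero => simp [hy, mul_comm]
  | succ k ih =>
    rw [Function.iterate_succ_apply', ih, map_add, map_nsmul, D.leibniz, D.leibniz, hx, hy,
      ← Function.iterate_succ_apply' D, ← Function.iterate_succ_apply' D]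
    simp only [smul_eq_mul, nsmul_eq_mul]
    push_cast
    ring

variable [IsDomain A] [CharZero A]

-- The leading term `(k + 1) x D^k g` of Leibniz' rule shows that multiplication by `y` raises the
-- nilpotency order of `D` by exactly one.
theorem iterate_derivation_pred_eq_zero (hx : D x = 0) (hy : D y = x) (hx₀ : x ≠ 0) {g : A}
    (hg : ∃ N, D^[N] g = 0) {k : ℕ} (h : D^[k] (y * g) = 0) : D^[k - 1] g = 0 := by
  have iterate_zero (j : ℕ) : D^[j] 0 = 0 := iterate_map_zero D j
  cases k with
  | zero =>
    have hy₀ : y ≠ 0 := fun hy₀ => hx₀ (by rw [← hy, hy₀, map_zero])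
    exact (mul_eq_zero.1 h).resolve_left hy₀
  | succ k =>
    obtain ⟨N, hN⟩ := hg
    suffices descend : ∀ j, D^[j + k] g = 0 → D^[k] g = 0 from
      descend N (by rw [add_comm, Function.iterate_add_apply, hN, iterate_zero])
    intro j
    induction j with
    | zero => simp
    | succ j ih =>
      intro hj
      refine ih ?_
      have leibniz := iterate_succ_derivation_mul D hx hy (j + k) g
      rw [show j + k + 1 = j + (k + 1) by ring, Function.iterate_add_apply, h, iterate_zero,
        ← show j + 1 + k = j + (k + 1) by ring, hj, mul_zero, zero_add, eq_comm,
        smul_eq_zero_iff_right (by lia)] at leibniz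
      exact (mul_eq_zero.1 leibniz).resolve_left hx₀

theorem iterate_derivation_sub_eq_zero (hx : D x = 0) (hy : D y = x) (hx₀ : x ≠ 0)
    (hD : ∀ g, ∃ N, D^[N] g = 0) {k : ℕ} (n : ℕ) {g : A} (h : D^[k] (y ^ n * g) = 0) :
    D^[k - n] g = 0 := by
  induction n generalizing k with
  | zero => simpa using h
  | succ n ih =>
    rw [pow_succ', mul_assoc] at h
    have := ih (iterate_derivation_pred_eq_zero D hx hy hx₀ (hD _) h)
    rwa [Nat.sub_sub, add_comm 1 n] at this

end Derivation

theorem iterate_sub_apply_eq_zero {R M : Type*} [Ring R] [AddCommGroup M] [Module R M]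
    {S E : Module.End R M} (hSE : Commute S E) {v : M} {j k : ℕ} (hS : S^[j + 1] v = 0)
    (hE : E^[k + 1] v = 0) : (S - E)^[j + k + 1] v = 0 := by
  have hSE' : Commute S (-E) := hSE.neg_right
  rw [← Module.End.pow_apply] at hS hE ⊢
  have hE' : ((-E) ^ (k + 1)) v = 0 := by
    rw [neg_pow, Module.End.mul_apply, hE, map_zero]
  rw [sub_eq_add_neg, hSE'.add_pow, LinearMap.sum_apply]
  refine Finset.sum_eq_zero fun i hi => ?_
  rw [← Nat.cast_comm, Module.End.mul_apply]
  suffices h : (S ^ i * (-E) ^ (j + k + 1 - i)) v = 0 by rw [h, map_zero]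
  rcases le_or_gt (j + 1) i with h | h
  · obtain ⟨c, rfl⟩ := Nat.exists_eq_add_of_le' h
    rw [(hSE'.pow_pow _ _).eq, pow_add, Module.End.mul_apply, Module.End.mul_apply, hS, map_zero,
      map_zero]
  · obtain ⟨c, hc⟩ := Nat.exists_eq_add_of_le' (show k + 1 ≤ j + k + 1 - i by lia)
    rw [hc, pow_add, Module.End.mul_apply, Module.End.mul_apply, hE', map_zero, map_zero]

section RestrictMonomials

variable {σ R : Type*} [CommSemiring R]

open Classical in
/-- The part of a polynomial supported on the monomials satisfying `P`. -/
noncomputable def restrictMonomials (P : (σ →₀ ℕ) → Prop) (f : MvPolynomial σ R) :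
    MvPolynomial σ R :=
  ∑ m ∈ f.support with P m, monomial m (coeff m f)

variable (P : (σ →₀ ℕ) → Prop)

open Classical in
theorem coeff_restrictMonomials (f : MvPolynomial σ R) (m : σ →₀ ℕ) :
    coeff m (restrictMonomials P f) = if P m then coeff m f else 0 := by
  simp only [restrictMonomials, coeff_sum, coeff_monomial, Finset.sum_ite_eq', Finset.mem_filter,
    mem_support_iff]
  grind

theorem mem_support_restrictMonomials {f : MvPolynomial σ R} {m : σ →₀ ℕ} :
    m ∈ (restrictMonomials P f).support ↔ m ∈ f.support ∧ P m := by
  classical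
  simp only [mem_support_iff, coeff_restrictMonomials, ne_eq, ite_eq_right_iff]
  grind

@[simp]
theorem restrictMonomials_zero : restrictMonomials P (0 : MvPolynomial σ R) = 0 := by
  simp [restrictMonomials]

end RestrictMonomials

section Polarization

variable {σ β R : Type*} [CommRing R] {x y : β → σ} {s : Finset β}

variable (R x y s) in
/-- The polarization operator `∑ b ∈ s, x_b ∂/∂y_b`, the infinitesimal generator of the
substitutions `y_b ↦ y_b + t x_b`. -/
noncomputable def polarization : Derivation R (MvPolynomial σ R) (MvPolynomial σ R) :=
  ∑ b ∈ s, (X (x b) : MvPolynomial σ R) • pderiv (y b)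

theorem polarization_apply (f : MvPolynomial σ R) :
    polarization R x y s f = ∑ b ∈ s, X (x b) * pderiv (y b) f := by
  rw [polarization, ← Derivation.coeFnAddMonoidHom_apply, map_sum, Finset.sum_apply]
  rfl

theorem polarization_X [DecidableEq σ] (v : σ) :
    polarization R x y s (X v) = ∑ b ∈ s, if y b = v then X (x b) else 0 := by
  simp only [polarization_apply, pderiv_X, Pi.single_apply, mul_ite, mul_one, mul_zero, eq_comm]

theorem polarization_X_eq_zero {v : σ} (h : ∀ b ∈ s, y b ≠ v) :
    polarization R x y s (X v) = 0 := by
  classical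
  rw [polarization_X]
  exact Finset.sum_eq_zero fun b hb => if_neg (h b hb)

theorem polarization_X_apply (hy : Function.Injective y) {a : β} (ha : a ∈ s) :
    polarization R x y s (X (y a)) = X (x a) := by
  classical
  simp [polarization_X, hy.eq_iff, ha]

open Finsupp (single)

theorem coeff_polarization [DecidableEq σ] (f : MvPolynomial σ R) (m : σ →₀ ℕ) :
    coeff m (polarization R x y s f) = ∑ b ∈ s, if x b ∈ m.support then
      coeff (m - single (x b) 1 + single (y b) 1) f *
        ((m - single (x b) 1 : σ →₀ ℕ) (y b) + 1) else 0 := by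
  simp only [polarization_apply, coeff_sum, coeff_X_mul', coeff_pderiv]

theorem exists_of_mem_support_polarization {f : MvPolynomial σ R} {m : σ →₀ ℕ}
    (hm : m ∈ (polarization R x y s f).support) :
    ∃ b ∈ s, ∃ m', m = m' + single (x b) 1 ∧ m' + single (y b) 1 ∈ f.support := by
  classical
  rw [mem_support_iff, coeff_polarization] at hm
  obtain ⟨b, hb, hne⟩ := Finset.exists_ne_zero_of_sum_ne_zero hm
  obtain ⟨hx, hne⟩ := ite_ne_right_iff.1 hne
  refine ⟨b, hb, m - single (x b) 1, ?_, mem_support_iff.2 (left_ne_zero_of_mul hne)⟩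
  rw [tsub_add_cancel_of_le]
  simpa [Nat.one_le_iff_ne_zero] using hx

theorem iterate_polarization_eq_zero (hxy : ∀ b c, x b ≠ y c) {k : ℕ} {f : MvPolynomial σ R}
    (hf : ∀ m ∈ f.support, ∑ b ∈ s, m (y b) < k) : (polarization R x y s)^[k] f = 0 := by
  induction k generalizing f with
  | zero => exact support_eq_empty.1 (Finset.eq_empty_iff_forall_notMem.2 fun m hm => by
      simpa using hf m hm)
  | succ k ih =>
    refine ih fun m hm => ?_
    obtain ⟨b, hb, m', rfl, hm'⟩ := exists_of_mem_support_polarization hm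
    refine Nat.lt_of_lt_of_le (Finset.sum_lt_sum (fun c _ => ?_) ⟨b, hb, ?_⟩)
      (Nat.le_of_lt_succ (hf _ hm'))
    · simp [Finsupp.single_eq_of_ne (hxy b c).symm]
    · simp [Finsupp.single_eq_of_ne (hxy b b).symm]

theorem exists_iterate_polarization_eq_zero (hxy : ∀ b c, x b ≠ y c) (f : MvPolynomial σ R) :
    ∃ N, (polarization R x y s)^[N] f = 0 :=
  ⟨f.support.sup (fun m => ∑ b ∈ s, m (y b)) + 1, iterate_polarization_eq_zero hxy fun _ hm =>
    Nat.lt_succ_of_le (Finset.le_sup (f := fun m => ∑ b ∈ s, m (y b)) hm)⟩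

theorem commute_polarization (hxy : ∀ b c, x b ≠ y c) (s t : Finset β) :
    Commute (polarization R x y s : Module.End R (MvPolynomial σ R)) (polarization R x y t) := by
  classical
  have comm_eq_zero : ⁅polarization R x y s, polarization R x y t⁆ = 0 :=
    derivation_ext fun v => by
      have apply_X_x (s : Finset β) (b : β) : polarization R x y s (X (x b)) = 0 :=
        polarization_X_eq_zero fun c _ => (hxy b c).symm
      simp [Derivation.commutator_apply, polarization_X, apply_ite, apply_X_x]
  exact LinearMap.ext fun f => sub_eq_zero.1 (DFunLike.congr_fun comm_eq_zero f)

theorem iterate_polarization_restrictMonomials {P : (σ →₀ ℕ) → Prop}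
    (hP : ∀ b ∈ s, ∀ m, P (m + single (x b) 1) ↔ P (m + single (y b) 1))
    (k : ℕ) (f : MvPolynomial σ R) :
    (polarization R x y s)^[k] (restrictMonomials P f) =
      restrictMonomials P ((polarization R x y s)^[k] f) := by
  classical
  have semiconj : Function.Semiconj (restrictMonomials P) (polarization R x y s)
      (polarization R x y s) := by
    intro f
    ext m
    have exchange : ∀ b ∈ s, x b ∈ m.support → (P (m - single (x b) 1 + single (y b) 1) ↔ P m) :=
      fun b hb hx => by
        rw [← hP b hb, tsub_add_cancel_of_le]
        simpa [Nat.one_le_iff_ne_zero] using hx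
    simp only [coeff_polarization, coeff_restrictMonomials]
    split_ifs with hm
    · refine (Finset.sum_congr rfl fun b hb => ?_).symm
      grind
    · refine (Finset.sum_eq_zero fun b hb => ?_).symm
      grind
  exact ((semiconj.iterate_right k) f).symm

end Polarization

section Ballot

variable {σ β R : Type*} [CommRing R] {x y : β → σ}

open Finsupp (single)

theorem exists_eq_X_pow_mul {g : MvPolynomial σ R} {i : σ} {n : ℕ} (h : ∀ m ∈ g.support, n ≤ m i) :
    ∃ g', g = X i ^ n * g' ∧ ∀ m, m ∈ g'.support ↔ m + single i n ∈ g.support := by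
  classical
  refine ⟨g.divMonomial (single i n), ?_, fun m => ?_⟩
  · have remainder_eq_zero : g.modMonomial (single i n) = 0 := by
      ext m
      by_cases hm : single i n ≤ m
      · rw [coeff_modMonomial_of_le _ hm, coeff_zero]
      · rw [coeff_modMonomial_of_not_le _ hm, coeff_zero, ← notMem_support_iff]
        exact fun hg => hm (Finsupp.single_le_iff.2 (h m hg))
    rw [X_pow_eq_monomial]
    simpa [remainder_eq_zero] using (divMonomial_add_modMonomial g (single i n)).symm
  · rw [mem_support_iff, coeff_divMonomial, add_comm, mem_support_iff]

variable [IsDomain R] [CharZero R]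

theorem iterate_polarization_of_insert [DecidableEq β] (hy : Function.Injective y)
    (hxy : ∀ b c, x b ≠ y c) {s : Finset β} {a : β} (ha : a ∉ s) {n d r : ℕ}
    {g : MvPolynomial σ R} (hg : g ≠ 0) (hn : ∀ m ∈ g.support, n ≤ m (y a))
    (hd : ∀ m ∈ g.support, m (y a) ≤ d)
    (hD : (polarization R x y (insert a s))^[r + 1] g = 0) :
    n ≤ r ∧ (polarization R x y s)^[r - n + (d - n) + 1] g = 0 := by
  obtain ⟨g', rfl, hg'⟩ := exists_eq_X_pow_mul hn
  have insert_g' : (polarization R x y (insert a s))^[r + 1 - n] g' = 0 :=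
    iterate_derivation_sub_eq_zero _ (polarization_X_eq_zero fun c _ => (hxy a c).symm)
      (polarization_X_apply hy (Finset.mem_insert_self a s)) (X_ne_zero _)
      (exists_iterate_polarization_eq_zero hxy) n hD
  have hnr : n ≤ r := by
    by_contra! hrn
    rw [Nat.sub_eq_zero_of_le hrn] at insert_g'
    exact hg (by rw [show g' = 0 from insert_g', mul_zero])
  have singleton_g' : (polarization R x y {a})^[d - n + 1] g' = 0 :=
    iterate_polarization_eq_zero hxy fun m hm => by
      have := hd _ ((hg' m).1 hm)
      simp only [Finsupp.add_apply, Finsupp.single_eq_same, Finset.sum_singleton] at this ⊢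
      lia
  have s_g' : (polarization R x y s)^[r - n + (d - n) + 1] g' = 0 := by
    have sub_eq : (polarization R x y s : Module.End R (MvPolynomial σ R)) =
        polarization R x y (insert a s) - polarization R x y {a} := by
      simp only [polarization, Finset.sum_insert ha, Finset.sum_singleton,
        Derivation.coe_add_linearMap, add_sub_cancel_left]
    rw [← Derivation.coeFn_coe, sub_eq]
    refine iterate_sub_apply_eq_zero (commute_polarization hxy _ _) ?_ singleton_g'
    rwa [← Nat.sub_add_comm hnr]
  refine ⟨hnr, ?_⟩
  have apply_X_pow : polarization R x y s (X (y a) ^ n) = 0 := by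
    have apply_X : polarization R x y s (X (y a)) = 0 :=
      polarization_X_eq_zero fun b hb => hy.ne (ne_of_mem_of_not_mem hb ha)
    rw [Derivation.leibniz_pow, apply_X, smul_zero, smul_zero]
  rw [iterate_derivation_mul_of_apply_eq_zero _ apply_X_pow, s_g', mul_zero]

theorem sum_le_of_iterate_polarization_eq_zero [LinearOrder β] (hy : Function.Injective y)
    (hxy : ∀ b c, x b ≠ y c) {u d : β → ℕ} (s : Finset β) {r : ℕ} {g : MvPolynomial σ R}
    (hu : ∃ m ∈ g.support, ∀ b ∈ s, m (y b) = u b)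
    (hd : ∀ m ∈ g.support, ∀ b ∈ s, m (y b) ≤ d b)
    (hlex : ∀ m ∈ g.support, ∀ a ∈ s, (∀ b ∈ s, b < a → m (y b) = u b) → u a ≤ m (y a))
    (hD : (polarization R x y s)^[r + 1] g = 0) {a : β} (ha : a ∈ s) :
    ∑ b ∈ s with b ≤ a, u b ≤ r + ∑ b ∈ s with b < a, (d b - u b) := by
  induction s using Finset.induction_on_min generalizing r g with
  | empty => simp at ha
  | insert c s hc ih =>
    simp only [Finset.forall_mem_insert] at hu hd hlex
    obtain ⟨m₀, hm₀, hm₀c, hm₀s⟩ := hu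
    have c_notMem : c ∉ s := fun h => lt_irrefl c (hc c h)
    have le_apply_c (m) (hm : m ∈ g.support) : u c ≤ m (y c) :=
      (hlex m hm).1 ⟨fun h => absurd h (lt_irrefl c), fun b hb h => absurd h (hc b hb).not_gt⟩
    obtain ⟨hcr, hDs⟩ := iterate_polarization_of_insert hy hxy c_notMem
      (support_nonempty.1 ⟨m₀, hm₀⟩) le_apply_c (fun m hm => (hd m hm).1) hD
    rcases Finset.mem_insert.1 ha with rfl | has
    · have le_filter : (insert a s).filter (· ≤ a) = {a} := by grind
      rw [le_filter, Finset.sum_singleton]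
      exact hcr.trans (Nat.le_add_right _ _)
    let P : (σ →₀ ℕ) → Prop := fun m => m (y c) = u c
    have stable : ∀ b ∈ s, ∀ m, P (m + single (x b) 1) ↔ P (m + single (y b) 1) :=
      fun b hb m => by
        have hyb : y c ≠ y b := hy.ne (hc b hb).ne
        simp [P, Finsupp.single_eq_of_ne (hxy b c).symm, Finsupp.single_eq_of_ne hyb]
    have rest := ih (g := restrictMonomials P g) (r := r - u c + (d c - u c))
      ⟨m₀, (mem_support_restrictMonomials P).2 ⟨hm₀, hm₀c⟩, hm₀s⟩
      (fun m hm => (hd m ((mem_support_restrictMonomials P).1 hm).1).2)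
      (fun m hm b hb h => by
        obtain ⟨hmg, hmc⟩ := (mem_support_restrictMonomials P).1 hm
        exact (hlex m hmg).2 b hb ⟨fun _ => hmc, h⟩)
      (by rw [iterate_polarization_restrictMonomials stable, hDs, restrictMonomials_zero]) has
    rw [Finset.filter_insert, if_pos (hc a has).le, Finset.filter_insert, if_pos (hc a has),
      Finset.sum_insert (by simp [c_notMem]), Finset.sum_insert (by simp [c_notMem])]
    lia

end Ballot

section FormalShift

variable {σ R : Type*} [CommRing R] (D : Derivation R (MvPolynomial σ R) (MvPolynomial σ R))

/-- The substitution `X_v ↦ X_v + t * D X_v`, with the parameter `t` kept as the variable of a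
univariate polynomial. -/
noncomputable def formalShift : MvPolynomial σ R →ₐ[R] Polynomial (MvPolynomial σ R) :=
  aeval fun v => Polynomial.C (X v) + Polynomial.X * Polynomial.C (D (X v))

theorem eval_formalShift (q f : MvPolynomial σ R) :
    (formalShift D f).eval q = aeval (fun v => X v + q * D (X v)) f := by
  have comp_eq : ((Polynomial.aeval q).restrictScalars R).comp (formalShift D) =
      aeval fun v => X v + q * D (X v) :=
    algHom_ext fun v => by simpa [formalShift] using mul_comm _ _
  rw [← comp_eq]
  simp [Polynomial.coe_aeval_eq_eval]

theorem coeff_zero_formalShift (f : MvPolynomial σ R) : (formalShift D f).coeff 0 = f := by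
  rw [Polynomial.coeff_zero_eq_eval_zero, eval_formalShift]
  simp

theorem coeff_one_formalShift (f : MvPolynomial σ R) : (formalShift D f).coeff 1 = D f := by
  induction f using MvPolynomial.induction_on with
  | C a =>
    rw [← algebraMap_eq, AlgHom.commutes, D.map_algebraMap,
      IsScalarTower.algebraMap_apply R (MvPolynomial σ R), Polynomial.algebraMap_eq,
      Polynomial.coeff_C_of_ne_zero one_ne_zero]
  | add p q hp hq => rw [map_add, Polynomial.coeff_add, hp, hq, map_add]
  | mul_X p v hp =>
    have apply_X : formalShift D (X v) =
        Polynomial.C (X v) + Polynomial.X * Polynomial.C (D (X v)) := by simp [formalShift]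
    have coeff_zero := coeff_zero_formalShift D p
    rw [map_mul, apply_X, mul_add, ← mul_assoc, mul_right_comm, Polynomial.coeff_add,
      Polynomial.coeff_mul_C, hp, Polynomial.coeff_mul_X, Polynomial.coeff_mul_C, coeff_zero,
      D.leibniz, smul_eq_mul, smul_eq_mul]
    ring

theorem derivation_eq_zero_of_forall_aeval_eq [IsDomain R] [Infinite R] {f : MvPolynomial σ R}
    (h : ∀ t : R, aeval (fun v => X v + C t * D (X v)) f = f) : D f = 0 := by
  have formalShift_eq : formalShift D f = Polynomial.C f := by
    refine Polynomial.eq_of_infinite_eval_eq _ _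
      ((Set.infinite_range_of_injective (C_injective σ R)).mono ?_)
    rintro _ ⟨t, rfl⟩
    rw [Set.mem_ofPred_eq, eval_formalShift, h, Polynomial.eval_C]
  rw [← coeff_one_formalShift, formalShift_eq, Polynomial.coeff_C_of_ne_zero one_ne_zero]

end FormalShift

section ColumnSubst

variable {σ β ι R : Type*} [Fintype ι]

/-- For the generic matrix with rows `β` and columns `ι`, whose `(b, k)` entry is the variable
`X (e (b, k))`, the substitution of `M * A` for `M`. -/
noncomputable def columnSubst [CommSemiring R] (e : β × ι ≃ σ) (A : Matrix ι ι R) :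
    MvPolynomial σ R →ₐ[R] MvPolynomial σ R :=
  aeval fun v => ∑ k, C (A k (e.symm v).2) * X (e ((e.symm v).1, k))

/-- `f` is a semi-invariant of weight `w` for the action of `GL ι` on the columns of the generic
matrix described by `e`. -/
def IsColumnSemiInvariant [Field R] [DecidableEq ι] (e : β × ι ≃ σ) (f : MvPolynomial σ R)
    (w : ℤ) : Prop :=
  ∀ A : Matrix ι ι R, IsUnit A.det → columnSubst e A f = C (A.det ^ w) * f

theorem columnSubst_transvection [CommRing R] [DecidableEq ι] [Fintype β] (e : β × ι ≃ σ)
    (p p' : ι) (t : R) :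
    columnSubst e (Matrix.transvection p p' t) = aeval fun v =>
      X v + C t * polarization R (fun b => e (b, p)) (fun b => e (b, p')) Finset.univ (X v) := by
  classical
  refine congrArg aeval (funext fun v => ?_)
  obtain ⟨⟨b, k⟩, rfl⟩ := e.surjective v
  have polarization_entry :
      polarization R (fun b => e (b, p)) (fun b => e (b, p')) Finset.univ (X (e (b, k))) =
        if k = p' then X (e (b, p)) else 0 := by
    split_ifs with hk
    · rw [hk]
      exact polarization_X_apply (y := fun b => e (b, p'))
        (fun b c h => (Prod.ext_iff.1 (e.injective h)).1) (Finset.mem_univ b)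
    · exact polarization_X_eq_zero fun c _ h => hk (Prod.ext_iff.1 (e.injective h)).2.symm
  simp only [polarization_entry, Equiv.symm_apply_apply, Matrix.transvection, Matrix.add_apply,
    Matrix.one_apply, Matrix.single_apply, C_add, add_mul, Finset.sum_add_distrib, apply_ite C,
    C_0, C_1, ite_mul, one_mul, zero_mul, Finset.sum_ite_eq', Finset.mem_univ, if_true, ite_and,
    Finset.sum_ite_eq, mul_ite, mul_zero]
  simp only [eq_comm]

theorem columnSubst_diagonal [CommSemiring R] [DecidableEq ι] (e : β × ι ≃ σ) (c : ι → R) :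
    columnSubst e (Matrix.diagonal c) = aeval fun v => C (c (e.symm v).2) * X v := by
  refine congrArg aeval (funext fun v => ?_)
  simp [Matrix.diagonal_apply, apply_ite C]

theorem coeff_aeval_C_mul_X [CommSemiring R] (c : σ → R) (f : MvPolynomial σ R) (m : σ →₀ ℕ) :
    coeff m (aeval (fun v => C (c v) * X v) f) = (m.prod fun v n => c v ^ n) * coeff m f := by
  classical
  induction f using MvPolynomial.induction_on' with
  | monomial n a =>
    have aeval_monomial_eq : aeval (fun v => C (c v) * X v) (monomial n a) =
        monomial n ((n.prod fun v k => c v ^ k) * a) := by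
      rw [aeval_monomial, monomial_eq, map_mul, map_finsuppProd, algebraMap_eq]
      simp only [mul_pow, Finsupp.prod_mul, map_pow]
      ring
    rw [aeval_monomial_eq, coeff_monomial, coeff_monomial]
    split_ifs with hnm
    · rw [hnm]
    · rw [mul_zero]
  | add p q hp hq => rw [map_add, coeff_add, coeff_add, hp, hq, mul_add]

section IsColumnSemiInvariant

variable [Field R] [CharZero R] [DecidableEq ι] [Fintype β] {e : β × ι ≃ σ} {f : MvPolynomial σ R}
  {w : ℤ}

theorem IsColumnSemiInvariant.polarization_eq_zero (hf : IsColumnSemiInvariant e f w) {p p' : ι}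
    (hp : p ≠ p') :
    polarization R (fun b => e (b, p)) (fun b => e (b, p')) Finset.univ f = 0 :=
  derivation_eq_zero_of_forall_aeval_eq _ fun t => by
    rw [← columnSubst_transvection, hf _ (by simp [Matrix.det_transvection_of_ne _ _ hp]),
      Matrix.det_transvection_of_ne _ _ hp, one_zpow, C_1, one_mul]

theorem IsColumnSemiInvariant.sum_eq (hf : IsColumnSemiInvariant e f w) {m : σ →₀ ℕ}
    (hm : m ∈ f.support) (p : ι) : ((∑ b, m (e (b, p)) : ℕ) : ℤ) = w := by
  let c : ι → R := Pi.mulSingle p 2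
  have det_eq : (Matrix.diagonal c).det = 2 := by
    rw [Matrix.det_diagonal, Finset.prod_pi_mulSingle']; simp
  have prod_eq : (m.prod fun v n => c (e.symm v).2 ^ n) = 2 ^ ∑ b, m (e (b, p)) := by
    rw [Finsupp.prod_of_support_subset m (s := Finset.univ.map e.toEmbedding)
      (fun v _ => by simp) _ (by simp), Finset.prod_map, Fintype.prod_prod_type_right,
      Finset.prod_eq_single p]
    · simp [c, Finset.prod_pow_eq_pow_sum]
    · intro k _ hk
      simp [c, hk]
    · simp
  have semi := congrArg (coeff m) (hf (Matrix.diagonal c) (by simp [det_eq]))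
  rw [columnSubst_diagonal, coeff_aeval_C_mul_X, coeff_C_mul, det_eq, prod_eq] at semi
  have pow_eq := mul_right_cancel₀ (mem_support_iff.1 hm) semi
  refine zpow_right_injective₀ (a := (2 : ℚ)) (by norm_num) (by norm_num)
    (Rat.cast_injective (α := R) ?_)
  simpa [-Nat.cast_sum] using pow_eq

end IsColumnSemiInvariant

end ColumnSubst

section SameColumnPairDegrees

variable {σ β ι : Type*} [DecidableEq ι]

/-- In each row of the matrix of variables described by `e`, the exponent vector `m` has the same
total degree as `u` in the columns `p` and `p'`, and the same degree as `u` in every other column.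
The swap lets both requirements be stated by one equation. -/
def SameColumnPairDegrees (e : β × ι ≃ σ) (p p' : ι) (u m : σ →₀ ℕ) : Prop :=
  ∀ b k, m (e (b, k)) + m (e (b, Equiv.swap p p' k)) = u (e (b, k)) + u (e (b, Equiv.swap p p' k))

theorem sameColumnPairDegrees_add_single (e : β × ι ≃ σ) (p p' : ι) (u m : σ →₀ ℕ)
    (b : β) :
    SameColumnPairDegrees e p p' u (m + Finsupp.single (e (b, p)) 1) ↔
      SameColumnPairDegrees e p p' u (m + Finsupp.single (e (b, p')) 1) := by
  classical
  have swap_eq_left (k : ι) : p = Equiv.swap p p' k ↔ p' = k := by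
    rw [← Equiv.swap_apply_eq_iff, Equiv.swap_apply_left]
  have swap_eq_right (k : ι) : p' = Equiv.swap p p' k ↔ p = k := by
    rw [← Equiv.swap_apply_eq_iff, Equiv.swap_apply_right]
  refine forall₂_congr fun c k => ?_
  simp only [Finsupp.add_apply, Finsupp.single_apply, e.injective.eq_iff, Prod.mk.injEq,
    swap_eq_left, swap_eq_right]
  grind

end SameColumnPairDegrees

section LeadingMonomial

variable {K r0 r1 : ℕ} {f : KPoly K r0 r1} {u : KVar K r0 r1 →₀ ℕ} {β ι : Type*}
  [LinearOrder β] [LinearOrder ι] {e : β × ι ≃ KVar K r0 r1} {p p' : ι}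

theorem IsLM.apply_le (hu : IsLM f u) (he : ∀ q q', q < q' → VarGT (e q) (e q')) (hp : p < p')
    {m : KVar K r0 r1 →₀ ℕ} (hm : m ∈ f.support) (hum : SameColumnPairDegrees e p p' u m) {a : β}
    (ha : ∀ b < a, m (e (b, p')) = u (e (b, p'))) : u (e (a, p')) ≤ m (e (a, p')) := by
  by_contra! hlt
  obtain ⟨v, hv, hagree⟩ := (hu.2 m hm).resolve_left fun h => hlt.ne (by rw [h])
  obtain ⟨⟨b, k⟩, rfl⟩ := e.surjective v
  have pair_a := hum a p
  have pair_b := hum b k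
  rw [Equiv.swap_apply_left] at pair_a
  have not_gt : ¬ VarGT (e (a, p)) (e (b, k)) := fun h => by
    have := hagree _ h
    lia
  rcases eq_or_ne k p with rfl | hkp
  · rw [Equiv.swap_apply_left] at pair_b
    have hab : a < b := by
      by_contra! hba
      rcases hba.lt_or_eq with hba | rfl
      · have := ha b hba
        lia
      · lia
    exact not_gt (he _ _ (Prod.mk_lt_mk_of_lt_of_le hab le_rfl))
  rcases eq_or_ne k p' with rfl | hkp'
  · have hab : a ≤ b := not_lt.1 fun hba => hv.ne (ha b hba)
    exact not_gt (he _ _ (Prod.mk_lt_mk_of_le_of_lt hab hp))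
  · rw [Equiv.swap_apply_of_ne_of_ne hkp hkp'] at pair_b
    lia

theorem IsLM.sum_le_sum [Fintype β] (hu : IsLM f u) (he : ∀ q q', q < q' → VarGT (e q) (e q'))
    (hp : p < p')
    (hf : polarization ℂ (fun b => e (b, p)) (fun b => e (b, p')) Finset.univ f = 0) (a : β) :
    ∑ b with b ≤ a, u (e (b, p')) ≤ ∑ b with b < a, u (e (b, p)) := by
  let P := SameColumnPairDegrees e p p' u
  have hsum (m) (hm : P m) (b : β) :
      m (e (b, p)) + m (e (b, p')) = u (e (b, p)) + u (e (b, p')) := by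
    simpa using hm b p
  have ballot := sum_le_of_iterate_polarization_eq_zero (x := fun b => e (b, p))
    (y := fun b => e (b, p')) (u := fun b => u (e (b, p')))
    (d := fun b => u (e (b, p)) + u (e (b, p'))) (r := 0) (g := restrictMonomials P f)
    (fun b c h => (Prod.ext_iff.1 (e.injective h)).1)
    (fun b c h => hp.ne (Prod.ext_iff.1 (e.injective h)).2) Finset.univ
    ⟨u, (mem_support_restrictMonomials P).2 ⟨hu.1, fun _ _ => rfl⟩, fun _ _ => rfl⟩
    (fun m hm b _ => by
      have := hsum m ((mem_support_restrictMonomials P).1 hm).2 b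
      lia)
    (fun m hm c _ hc => by
      obtain ⟨hmf, hPm⟩ := (mem_support_restrictMonomials P).1 hm
      exact hu.apply_le he hp hmf hPm fun b hb => hc b (Finset.mem_univ b) hb)
    (by
      rw [iterate_polarization_restrictMonomials fun b _ m =>
        sameColumnPairDegrees_add_single e p p' u m b]
      simp [hf]) (Finset.mem_univ a)
  simpa using ballot

end LeadingMonomial

theorem apply_iff_lt_card_filter {n : ℕ} {P : Fin n → Prop} [DecidablePred P]
    (hP : ∀ c c', c ≤ c' → P c' → P c) (c : Fin n) :
    P c ↔ (c : ℕ) < (Finset.univ.filter P).card := by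
  constructor
  · intro hc
    have subset : Finset.Iic c ⊆ Finset.univ.filter P := fun x hx => by
      simpa using hP x c (Finset.mem_Iic.1 hx) hc
    simpa only [Fin.card_Iic, Nat.add_one_le_iff] using Finset.card_le_card subset
  · intro hc
    by_contra hPc
    have subset : Finset.univ.filter P ⊆ Finset.Iio c := fun x hx =>
      Finset.mem_Iio.2 (not_le.1 fun hcx => hPc (hP c x hcx (by simpa using hx)))
    exact hc.not_ge (by simpa using Finset.card_le_card subset)

theorem sum_sigma_single {σ : Type*} [Fintype σ] (u : σ →₀ ℕ) :
    ∑ z : (Σ v, Fin (u v)), Finsupp.single z.1 1 = u := by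
  classical
  rw [Fintype.sum_sigma]
  ext v
  simp

section ContentTableau

variable {σ β ι : Type*} [LinearOrder β] [Fintype β] {e : β × ι ≃ σ} {u : σ → ℕ} {n : ℕ}
  (hn : ∀ p, ∑ b, u (e (b, p)) = n)

/-- The increasing enumeration of the multiset containing each `b` with multiplicity
`u (e (b, p))`; equal elements are told apart by an index in `Fin (u (e (b, p)))`. -/
noncomputable def contentRow (p : ι) : Fin n ≃o Σₗ b, Fin (u (e (b, p))) :=
  Fintype.orderIsoFinOfCardEq _ <| by
    rw [Fintype.card_lex, Fintype.card_sigma]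
    simpa using hn p

/-- The tableau with weakly increasing rows whose row `p` contains the label `b` exactly
`u (e (b, p))` times. -/
noncomputable def contentTableau (p : ι) (c : Fin n) : β :=
  (ofLex (contentRow hn p c)).1

theorem contentTableau_mono (p : ι) : Monotone (contentTableau hn p) := fun c c' hc => by
  rcases Sigma.Lex.le_def.1 ((contentRow hn p).monotone hc) with h | ⟨h, -⟩
  · exact h.le
  · exact h.le

theorem card_filter_contentTableau (p : ι) (P : β → Prop) [DecidablePred P] :
    (Finset.univ.filter fun c => P (contentTableau hn p c)).card = ∑ b with P b, u (e (b, p)) := by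
  have card_sigma : ((Finset.univ.filter P).sigma
      fun b => (Finset.univ : Finset (Fin (u (e (b, p)))))).card = ∑ b with P b, u (e (b, p)) := by
    simp
  rw [← card_sigma]
  exact Finset.card_equiv ((contentRow hn p).toEquiv.trans ofLex) fun c => by
    rw [Finset.mem_filter]
    simp [contentTableau]

theorem contentTableau_lt {p p' : ι}
    (hpp' : ∀ a, ∑ b with b ≤ a, u (e (b, p')) ≤ ∑ b with b < a, u (e (b, p))) (c : Fin n) :
    contentTableau hn p c < contentTableau hn p' c := by
  have lt_card_le := (apply_iff_lt_card_filter
    (P := fun x => contentTableau hn p' x ≤ contentTableau hn p' c)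
    (fun x x' hx h => (contentTableau_mono hn p' hx).trans h) c).1 le_rfl
  rw [card_filter_contentTableau hn p' (· ≤ contentTableau hn p' c)] at lt_card_le
  refine (apply_iff_lt_card_filter (P := fun x => contentTableau hn p x < contentTableau hn p' c)
    (fun x x' hx h => (contentTableau_mono hn p hx).trans_lt h) c).2 ?_
  rw [card_filter_contentTableau hn p (· < contentTableau hn p' c)]
  exact lt_card_le.trans_le (hpp' _)

/-- The bijection from the boxes of `contentTableau` to the factors of the monomial `u`: a box with
label `b` in row `p` goes to a factor `X (e (b, p))`, numbered by its position from the left. -/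
noncomputable def contentBoxEquiv : ι × Fin n ≃ Σ v, Fin (u v) :=
  (((Equiv.sigmaEquivProd ι (Fin n)).symm.trans
    (Equiv.sigmaCongrRight fun p => (contentRow hn p).toEquiv.trans ofLex)).trans
    (⟨fun s => ⟨(s.2.1, s.1), s.2.2⟩, fun s => ⟨s.1.2, s.1.1, s.2⟩, fun _ => rfl, fun _ => rfl⟩ :
      (Σ p, Σ b, Fin (u (e (b, p)))) ≃ Σ q, Fin (u (e q)))).trans
    (Equiv.sigmaCongrLeft (β := fun v => Fin (u v)) e)

theorem contentBoxEquiv_fst (z : ι × Fin n) :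
    (contentBoxEquiv hn z).1 = e (contentTableau hn z.1 z.2, z.1) := rfl

theorem contentBoxEquiv_lt_iff {p : ι} {c c' : Fin n} :
    contentBoxEquiv hn (p, c) < contentBoxEquiv hn (p, c') ↔
      contentTableau hn p c = contentTableau hn p c' ∧ c < c' := by
  have lt_iff (s s' : Σ b, Fin (u (e (b, p)))) :
      (⟨e (s.1, p), s.2⟩ : Σ v, Fin (u v)) < ⟨e (s'.1, p), s'.2⟩ ↔
        s.1 = s'.1 ∧ toLex s < toLex s' := by
    obtain ⟨b, j⟩ := s
    obtain ⟨b', j'⟩ := s'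
    rw [Sigma.lt_def, Sigma.Lex.lt_def]
    constructor
    · rintro ⟨h, hj⟩
      obtain rfl : b = b' := (Prod.ext_iff.1 (e.injective h)).1
      exact ⟨rfl, Or.inr ⟨rfl, hj⟩⟩
    · rintro ⟨rfl, hb | ⟨_, hj⟩⟩
      · exact absurd hb (lt_irrefl b)
      · exact ⟨rfl, hj⟩
  rw [← (contentRow hn p).lt_iff_lt]
  exact lt_iff _ _

theorem sum_single_contentTableau [Fintype ι] {u : σ →₀ ℕ} (hn : ∀ p, ∑ b, u (e (b, p)) = n) :
    ∑ p, ∑ c, Finsupp.single (e (contentTableau hn p c, p)) 1 = u := by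
  have : Fintype σ := Fintype.ofEquiv _ e
  rw [← Fintype.sum_prod_type' (f := fun p c => Finsupp.single (e (contentTableau hn p c, p)) 1)]
  exact ((contentBoxEquiv hn).sum_comp fun z => Finsupp.single z.1 1).trans (sum_sigma_single u)

end ContentTableau

section Kronecker

variable {K r0 r1 : ℕ} {f : KPoly K r0 r1} {w0 w1 : ℤ}

variable (K r0 r1) in
/-- The variables as the entries of the matrix `M_1, …, M_K` stacked on top of each other: the
rows are indexed by the labels `(i, j)` of `T⁻` and the columns by the rows `k` of `T⁻`. -/
@[simps]
def minusEquiv : (Fin K ×ₗ Fin r1) × Fin r0 ≃ KVar K r0 r1 where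
  toFun q := ((ofLex q.1).1, (ofLex q.1).2, q.2)
  invFun v := (toLex (v.1, v.2.1), v.2.2)

variable (K r0 r1) in
/-- The variables as the entries of the matrix `M_1ᵀ, …, M_Kᵀ` stacked on top of each other: the
rows are indexed by the labels `(i, k)` of `T⁺` and the columns by the rows `j` of `T⁺`. -/
@[simps]
def plusEquiv : (Fin K ×ₗ Fin r0) × Fin r1 ≃ KVar K r0 r1 where
  toFun q := ((ofLex q.1).1, q.2, (ofLex q.1).2)
  invFun v := (toLex (v.1, v.2.2), v.2.1)

theorem varGT_minusEquiv (q q' : (Fin K ×ₗ Fin r1) × Fin r0) (h : q < q') :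
    VarGT (minusEquiv K r0 r1 q) (minusEquiv K r0 r1 q') := by
  rcases Prod.lt_iff.1 h with ⟨h₁, -⟩ | ⟨h₁, h₂⟩
  · rcases Prod.Lex.lt_iff.1 h₁ with h | ⟨h, h'⟩
    · exact Or.inl h
    · exact Or.inr ⟨h, Or.inl h'⟩
  · rcases Prod.Lex.le_iff.1 h₁ with h | ⟨h, h'⟩
    · exact Or.inl h
    · exact Or.inr ⟨h, h'.lt_or_eq.imp_right fun heq => ⟨heq, h₂⟩⟩

theorem varGT_plusEquiv (q q' : (Fin K ×ₗ Fin r0) × Fin r1) (h : q < q') :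
    VarGT (plusEquiv K r0 r1 q) (plusEquiv K r0 r1 q') := by
  rcases Prod.lt_iff.1 h with ⟨h₁, h₂⟩ | ⟨h₁, h₂⟩
  · rcases Prod.Lex.lt_iff.1 h₁ with h | ⟨h, h'⟩
    · exact Or.inl h
    · exact Or.inr ⟨h, h₂.lt_or_eq.imp_right fun heq => ⟨heq, h'⟩⟩
  · rcases Prod.Lex.le_iff.1 h₁ with h | ⟨h, -⟩
    · exact Or.inl h
    · exact Or.inr ⟨h, Or.inl h₂⟩

theorem glAct_one_right (g : Matrix (Fin r0) (Fin r0) ℂ) :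
    glAct g 1 = columnSubst (minusEquiv K r0 r1) g := by
  refine congrArg aeval (funext fun v => ?_)
  simp [Matrix.one_apply, apply_ite C]

theorem glAct_one_left (A : Matrix (Fin r1) (Fin r1) ℂ) (hA : IsUnit A.det) :
    glAct 1 A.transpose⁻¹ = columnSubst (plusEquiv K r0 r1) A := by
  refine congrArg aeval (funext fun v => ?_)
  rw [Matrix.nonsing_inv_nonsing_inv _ (by rwa [Matrix.det_transpose])]
  simp [Matrix.one_apply, apply_ite C]

theorem IsSemiInvariant.isColumnSemiInvariant_minusEquiv (hf : IsSemiInvariant f w0 w1) :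
    IsColumnSemiInvariant (minusEquiv K r0 r1) f w0 := fun A hA => by
  rw [← glAct_one_right, hf A 1 hA (by simp), Matrix.det_one, one_zpow, mul_one]

theorem IsSemiInvariant.isColumnSemiInvariant_plusEquiv (hf : IsSemiInvariant f w0 w1) :
    IsColumnSemiInvariant (plusEquiv K r0 r1) f (-w1) := fun A hA => by
  have det_inv : (A.transpose⁻¹).det = A.det⁻¹ := by
    rw [Matrix.det_nonsing_inv, Matrix.det_transpose, Ring.inverse_eq_inv']
  rw [← glAct_one_left A hA, hf 1 _ (by simp) (by rw [det_inv]; exact hA.inv), det_inv,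
    Matrix.det_one, one_zpow, one_mul, inv_zpow']

theorem exists_isLM (hf : f ≠ 0) : ∃ u, IsLM f u := by
  let toLexFun (u : KVar K r0 r1 →₀ ℕ) : Lex (Fin K ×ₗ Fin r1 ×ₗ Fin r0 → ℕ) :=
    toLex fun v => u ((ofLex v).1, ofLex (ofLex v).2)
  obtain ⟨u, hu, hmax⟩ := Finset.exists_max_image f.support toLexFun (support_nonempty.2 hf)
  refine ⟨u, hu, fun w hw => ?_⟩
  rcases (hmax w hw).eq_or_lt with h | ⟨v, hagree, hlt⟩
  · left
    ext ⟨i, j, k⟩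
    exact congrFun (congrArg ofLex h) (toLex (i, toLex (j, k)))
  · refine Or.inr ⟨((ofLex v).1, ofLex (ofLex v).2), hlt, ?_⟩
    rintro ⟨i, j, k⟩ hgt
    exact hagree (toLex (i, toLex (j, k)))
      (Prod.Lex.lt_iff.2 (hgt.imp_right (And.imp_right Prod.Lex.lt_iff.2)))

theorem isSemiStandardTab_contentTableau {N r : ℕ} {u : KVar K r0 r1 →₀ ℕ}
    {e : (Fin K ×ₗ Fin N) × Fin r ≃ KVar K r0 r1} {n : ℕ}
    (hn : ∀ p, ∑ b, u (e (b, p)) = n) (he : ∀ q q', q < q' → VarGT (e q) (e q'))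
    {w : ℤ} (hu : IsLM f u) (hf : IsColumnSemiInvariant e f w) :
    IsSemiStandardTab fun p c => ofLex (contentTableau hn p c) :=
  ⟨fun p _ _ hc => Prod.Lex.le_iff.1 (contentTableau_mono hn p hc), fun c _ _ hp =>
    Prod.Lex.lt_iff.1 (contentTableau_lt hn
      (hu.sum_le_sum he hp (hf.polarization_eq_zero hp.ne)) c)⟩

section OfExponents

variable {cm cp : ℕ} {u : KVar K r0 r1 →₀ ℕ} (hm : ∀ p, ∑ b, u (minusEquiv K r0 r1 (b, p)) = cm)
  (hp : ∀ p, ∑ b, u (plusEquiv K r0 r1 (b, p)) = cp)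

/-- The linked tableaux pair of a monomial `u`: each of `T⁻` and `T⁺` lists the factors of `u` row
by row in increasing order of the labels, and boxes standing for the same factor are linked. -/
noncomputable def LinkedPair.ofExponents : LinkedPair K r0 r1 cm cp :=
  have plus_link (z) : plusEquiv K r0 r1
      (contentTableau hp ((contentBoxEquiv hp).symm (contentBoxEquiv hm z)).1
          ((contentBoxEquiv hp).symm (contentBoxEquiv hm z)).2,
        ((contentBoxEquiv hp).symm (contentBoxEquiv hm z)).1) =
      minusEquiv K r0 r1 (contentTableau hm z.1 z.2, z.1) := by
    rw [← contentBoxEquiv_fst, ← contentBoxEquiv_fst, Equiv.apply_symm_apply]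
  { Tm := fun p c => ofLex (contentTableau hm p c)
    Tp := fun p c => ofLex (contentTableau hp p c)
    link := (contentBoxEquiv hm).trans (contentBoxEquiv hp).symm
    link_row := fun p c => congrArg (fun v => v.2.1) (plus_link (p, c))
    link_label := fun p c => congrArg (fun v => (v.1, v.2.2)) (plus_link (p, c)) }

theorem monExpM_ofExponents : monExpM (LinkedPair.ofExponents hm hp) = u :=
  sum_single_contentTableau hm

theorem monExpP_ofExponents : monExpP (LinkedPair.ofExponents hm hp) = u :=
  sum_single_contentTableau hp

theorem isSemiStandardLink_ofExponents : IsSemiStandardLink (LinkedPair.ofExponents hm hp) := by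
  intro p c c' hT hc
  let L := LinkedPair.ofExponents hm hp
  have same_factor (z) : contentBoxEquiv hp (L.link z) = contentBoxEquiv hm z :=
    Equiv.apply_symm_apply _ _
  have row_eq : L.link (p, c') = ((L.link (p, c)).1, (L.link (p, c')).2) :=
    Prod.ext (by rw [L.link_row, L.link_row, hT]) rfl
  have lt := (contentBoxEquiv_lt_iff hm).2 ⟨hT, hc⟩
  rw [← same_factor, ← same_factor, row_eq] at lt
  exact ((contentBoxEquiv_lt_iff hp).1 lt).2

end OfExponents

end Kronecker

/-- The leading monomial of any nonzero semi-invariant of the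
generalized Kronecker quiver is `Mon(T⁺) = Mon(T⁻)` for some semi-standard
linked tableaux pair. -/
theorem statement7 (K r0 r1 : ℕ) (hK : 1 ≤ K) (h0 : 1 ≤ r0) (h1 : 1 ≤ r1)
    (f : KPoly K r0 r1) (w0 w1 : ℤ) (hsi : IsSemiInvariant f w0 w1)
    (hf : f ≠ 0) :
    ∃ (cm cp : ℕ) (L : LinkedPair K r0 r1 cm cp),
      IsSemiStandardPair L ∧ monExpP L = monExpM L ∧ IsLM f (monExpP L) := by
  obtain ⟨u, hu⟩ := exists_isLM hf
  have minus_semi := hsi.isColumnSemiInvariant_minusEquiv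
  have plus_semi := hsi.isColumnSemiInvariant_plusEquiv
  have hm (p) : ∑ b, u (minusEquiv K r0 r1 (b, p)) = w0.toNat := by
    rw [← minus_semi.sum_eq hu.1 p, Int.toNat_natCast]
  have hp (p) : ∑ b, u (plusEquiv K r0 r1 (b, p)) = (-w1).toNat := by
    rw [← plus_semi.sum_eq hu.1 p, Int.toNat_natCast]
  refine ⟨w0.toNat, (-w1).toNat, LinkedPair.ofExponents hm hp, ⟨?_, ?_, ?_⟩, ?_, ?_⟩
  · exact isSemiStandardTab_contentTableau hm varGT_minusEquiv hu minus_semi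
  · exact isSemiStandardTab_contentTableau hp varGT_plusEquiv hu plus_semi
  · exact isSemiStandardLink_ofExponents hm hp
  · rw [monExpP_ofExponents, monExpM_ofExponents]
  · rwa [monExpP_ofExponents]

end QuiverSAGBI
end
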